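/- Let A be an Artin–Schelter regular connected graded k-algebra of global dimension n. Then A^e := A ⊗_k A^op is Artin–Schelter regular of global dimension 2n: gldim(A^e) = 2n, Ext^i_{A^e}(k, A^e) = 0 for all i ≠ 2n, and Ext^{2n}_{A^e}(k, A^e) is a 1-dimensional k-vector space (and the same holds over (A^e)^op). -/

import Mathlib

open CategoryTheory Limits TensorProduct

universe u

/-- The injective dimension of a module `M`, defined as the least `n : ℕ∞` for which
there is an injective resolution of `M` that vanishes in all cohomological degrees `> n`. -/
noncomputable def ModuleCat.injDim {R : Type u} [Ring R] (M : ModuleCat.{u} R) : ℕ∞ :=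
  sInf {n : ℕ∞ | ∃ I : InjectiveResolution M, ∀ i : ℕ, n < (i : ℕ∞) → IsZero (I.cocomplex.X i)}

/-- The projective dimension of a module `M`, defined as the least `n : ℕ∞` for which
there is a projective resolution of `M` that vanishes in all homological degrees `> n`. -/
noncomputable def ModuleCat.projDim {R : Type u} [Ring R] (M : ModuleCat.{u} R) : ℕ∞ :=
  sInf {n : ℕ∞ | ∃ P : ProjectiveResolution M, ∀ i : ℕ, n < (i : ℕ∞) → IsZero (P.complex.X i)}

/-- The injective dimension of a ring as a left module over itself. -/
noncomputable def Ring.selfInjDim (R : Type u) [Ring R] : ℕ∞ :=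
  ModuleCat.injDim (ModuleCat.of R R)

/-- The left global dimension of a ring: the supremum of the projective dimensions
of all left `R`-modules. -/
noncomputable def Ring.globalDim (R : Type u) [Ring R] : ℕ∞ :=
  ⨆ M : ModuleCat.{u} R, M.projDim

set_option synthInstance.maxHeartbeats 1000000
set_option maxHeartbeats 1000000

/-- The Ext groups `Ext^i_R(M, N)` over a `k`-algebra `R`, as `k`-vector spaces. -/
noncomputable def extGroup (k : Type u) [Field k] (R : Type u) [Ring R] [Algebra k R]
    (M N : ModuleCat.{u} R) (i : ℕ) : ModuleCat.{u} k :=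
  ((Ext k (ModuleCat.{u} R) i).obj (Opposite.op M)).obj N

/-- The augmentation of `Rᵐᵒᵖ` induced by an augmentation `ε : R →ₐ[k] k`. -/
def mopAug {k : Type u} [Field k] {R : Type u} [Ring R] [Algebra k R] (ε : R →ₐ[k] k) :
    Rᵐᵒᵖ →ₐ[k] k where
  toRingHom := ε.toRingHom.fromOpposite fun x y => Commute.all _ _
  commutes' r := by
    show ε (MulOpposite.unop (algebraMap k Rᵐᵒᵖ r)) = _
    simp

/-- An augmented `k`-algebra `(R, ε)` is Artin–Schelter regular of global dimension `n` if:
`gldim R = n`, `Ext^i_R(k, R) = 0` for `i ≠ n`, `Ext^n_R(k, R)` is a `1`-dimensional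
`k`-vector space, and the same conditions hold over `Rᵐᵒᵖ` (with the trivial modules given
by the augmentation). -/
noncomputable def IsASRegularAug (k : Type u) [Field k] (R : Type u) [Ring R] [Algebra k R]
    (ε : R →ₐ[k] k) (n : ℕ) : Prop :=
  letI : Module R k := Module.compHom k ε.toRingHom
  letI : Module Rᵐᵒᵖ k := Module.compHom k (mopAug ε).toRingHom
  Ring.globalDim R = (n : ℕ∞) ∧
    (∀ i : ℕ, i ≠ n →
      Subsingleton (extGroup k R (ModuleCat.of R k) (ModuleCat.of R R) i)) ∧
    Nonempty ((extGroup k R (ModuleCat.of R k) (ModuleCat.of R R) n) ≃ₗ[k] k) ∧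
    (∀ i : ℕ, i ≠ n →
      Subsingleton (extGroup k Rᵐᵒᵖ (ModuleCat.of Rᵐᵒᵖ k) (ModuleCat.of Rᵐᵒᵖ Rᵐᵒᵖ) i)) ∧
    Nonempty ((extGroup k Rᵐᵒᵖ (ModuleCat.of Rᵐᵒᵖ k) (ModuleCat.of Rᵐᵒᵖ Rᵐᵒᵖ) n) ≃ₗ[k] k)

/-!
The minimal free resolution of the trivial module `k` over an Artin–Schelter regular algebra of
global dimension `n` is finite, and its dual is, up to a shift by `n`, a resolution of `k` on the
other side. Conversely, such a self-dual resolution determines `Ext(k, A)`: it is `k` in degree `n`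
on both sides. Transposition gives self-dual resolutions over the opposite algebra, and the Künneth
theorem gives them, with the lengths added, over tensor products.

For the global dimension, take the minimal resolution of `A` by graded free `A ⊗ Aᵐᵒᵖ`-modules.
Since `A` is free as a right module over itself, this complex is contractible as a complex of right
modules, so tensoring it over `A` with any module `M` gives a projective resolution of `M`. For
`M = k` the result is the minimal resolution, which stops at the projective dimension of `k`; hence
so does the bimodule resolution, and this bounds the projective dimension of every `M`.
-/

/-! ### Projective resolutions and Ext -/

/-- A projective resolution `⋯ → X 1 → X 0 → M → 0` of an `R`-module, presented by linear maps
that are exact elementwise rather than as a chain complex. -/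
structure ModuleResolution (R : Type u) [Ring R] (M : Type u) [AddCommGroup M] [Module R M] where
  X : ℕ → ModuleCat.{u} R
  d : ∀ i, X (i + 1) →ₗ[R] X i
  aug : X 0 →ₗ[R] M
  projective : ∀ i, Module.Projective R (X i)
  aug_surjective : Function.Surjective aug
  exact_aug : Function.Exact (d 0) aug
  exact : ∀ i, Function.Exact (d (i + 1)) (d i)

namespace ModuleResolution

variable {R : Type u} [Ring R] {M : Type u} [AddCommGroup M] [Module R M]

/-- The chain complex `⋯ → X 1 → X 0` of a resolution. -/
noncomputable abbrev complex (P : ModuleResolution R M) : ChainComplex (ModuleCat.{u} R) ℕ :=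
  ChainComplex.of P.X (fun i ↦ ModuleCat.ofHom (P.d i)) fun i ↦ by
    ext x
    exact (P.exact i).apply_apply_eq_zero x

lemma complex_d (P : ModuleResolution R M) (i : ℕ) :
    P.complex.d (i + 1) i = ModuleCat.ofHom (P.d i) :=
  ChainComplex.of_d P.X (fun i ↦ ModuleCat.ofHom (P.d i)) i

lemma complex_d_comp_aug (P : ModuleResolution R M) :
    P.complex.d 1 0 ≫ ModuleCat.ofHom P.aug = 0 := by
  rw [complex_d]
  ext x
  exact P.exact_aug.apply_apply_eq_zero x

/-- The augmentation as a chain map to `M` placed in degree `0`. -/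
noncomputable abbrev augHom (P : ModuleResolution R M) :
    P.complex ⟶ (ChainComplex.single₀ (ModuleCat.{u} R)).obj (ModuleCat.of R M) :=
  (ChainComplex.toSingle₀Equiv P.complex (ModuleCat.of R M)).symm
    ⟨ModuleCat.ofHom P.aug, P.complex_d_comp_aug⟩

lemma quasiIsoAt_zero (P : ModuleResolution R M) : QuasiIsoAt P.augHom 0 := by
  rw [ChainComplex.quasiIsoAt₀_iff, ShortComplex.quasiIso_iff_of_zeros' _ rfl rfl rfl]
  let S : ShortComplex (ModuleCat.{u} R) := ShortComplex.mk (ModuleCat.ofHom (P.d 0))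
    (ModuleCat.ofHom P.aug) (ModuleCat.hom_ext P.exact_aug.linearMap_comp_eq_zero)
  refine (ShortComplex.exact_and_epi_g_iff_of_iso (S₂ := S) ?_).2 ⟨?_, ?_⟩
  · exact ShortComplex.isoMk (Iso.refl _) (Iso.refl _) (Iso.refl _)
      ((Category.id_comp _).trans ((P.complex_d 0).symm.trans (Category.comp_id _).symm))
      ((Category.id_comp _).trans (Category.comp_id _).symm)
  · exact (ShortComplex.moduleCat_exact_iff _).2 fun x hx ↦ (P.exact_aug x).1 hx
  · exact (ModuleCat.epi_iff_surjective _).2 P.aug_surjective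

lemma quasiIsoAt_succ (P : ModuleResolution R M) (i : ℕ) : QuasiIsoAt P.augHom (i + 1) := by
  rw [quasiIsoAt_iff_exactAt' _ _ (ChainComplex.exactAt_succ_single_obj _ _),
    HomologicalComplex.exactAt_iff' _ (i + 2) (i + 1) i (by simp) (by simp),
    ShortComplex.moduleCat_exact_iff]
  change ∀ x, (P.complex.d (i + 1) i).hom x = 0 →
    ∃ y, (P.complex.d (i + 1 + 1) (i + 1)).hom y = x
  rw [complex_d, complex_d]
  exact fun x hx ↦ (P.exact i x).1 hx

/-- The resolution in Mathlib's categorical form. -/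
noncomputable def toProjectiveResolution (P : ModuleResolution R M) :
    ProjectiveResolution (ModuleCat.of R M) where
  complex := P.complex
  projective i := (IsProjective.iff_projective (P.X i)).1 (P.projective i)
  π := P.augHom
  quasiIso := ⟨fun
    | 0 => P.quasiIsoAt_zero
    | i + 1 => P.quasiIsoAt_succ i⟩

lemma projDim_le (P : ModuleResolution R M) {n : ℕ} (hP : ∀ i, n < i → Subsingleton (P.X i)) :
    (ModuleCat.of R M).projDim ≤ n :=
  sInf_le ⟨P.toProjectiveResolution, fun i hi ↦
    have := hP i (by exact_mod_cast hi)
    ModuleCat.isZero_of_subsingleton (P.X i)⟩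

section Ext

variable (k : Type u) [Field k] [Algebra k R]
  (N : Type u) [AddCommGroup N] [Module R N] [Module k N] [IsScalarTower k R N]

/-- The `k`-space of `i`-cocycles of the complex `Hom_R(P, N)`. -/
noncomputable def cocycles (P : ModuleResolution R M) (i : ℕ) : Submodule k (P.X i →ₗ[R] N) :=
  LinearMap.ker (LinearMap.lcomp k N (P.d i))

/-- The `k`-space of `i`-coboundaries of the complex `Hom_R(P, N)`. -/
noncomputable def coboundaries (P : ModuleResolution R M) :
    ∀ i, Submodule k (P.X i →ₗ[R] N)
  | 0 => ⊥
  | i + 1 => LinearMap.range (LinearMap.lcomp k N (P.d i))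

variable {k N}

lemma mem_cocycles {P : ModuleResolution R M} {i : ℕ} {f : P.X i →ₗ[R] N} :
    f ∈ P.cocycles k N i ↔ f ∘ₗ P.d i = 0 :=
  Iff.rfl

lemma mem_coboundaries_succ {P : ModuleResolution R M} {i : ℕ} {f : P.X (i + 1) →ₗ[R] N} :
    f ∈ P.coboundaries k N (i + 1) ↔ ∃ g : P.X i →ₗ[R] N, g ∘ₗ P.d i = f :=
  Iff.rfl

variable (k N)

/-- The `i`-cochains of Mathlib's `Hom` complex are the `R`-linear maps on `X i`. -/
noncomputable def linearYonedaEquiv (P : ModuleResolution R M) (i : ℕ) :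
    (P.complex.linearYonedaObj k (ModuleCat.of R N)).X i ≃ₗ[k] (P.X i →ₗ[R] N) where
  toFun f := ModuleCat.Hom.hom f
  invFun f := ModuleCat.ofHom f
  map_add' _ _ := rfl
  map_smul' c f := by
    ext x
    exact algebraMap_smul R c (ModuleCat.Hom.hom f x)

lemma map_linearYonedaEquiv_ker (P : ModuleResolution R M) (i : ℕ) :
    (LinearMap.ker ((P.complex.linearYonedaObj k (ModuleCat.of R N)).d i (i + 1)).hom).map
      (P.linearYonedaEquiv k N i).toLinearMap = P.cocycles k N i := by
  ext f
  rw [Submodule.mem_map_equiv]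
  change P.complex.d (i + 1) i ≫ ModuleCat.ofHom f = 0 ↔ f ∘ₗ P.d i = 0
  rw [complex_d, ModuleCat.hom_ext_iff]
  rfl

lemma map_linearYonedaEquiv_range (P : ModuleResolution R M) (i : ℕ) :
    (LinearMap.range ((P.complex.linearYonedaObj k (ModuleCat.of R N)).d (i - 1) i).hom).map
      (P.linearYonedaEquiv k N i).toLinearMap = P.coboundaries k N i := by
  ext f
  rw [Submodule.mem_map_equiv]
  cases i with
  | zero =>
    rw [HomologicalComplex.shape _ _ _ (by simp), ModuleCat.hom_zero, LinearMap.range_zero]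
    exact ⟨fun h ↦ congrArg ModuleCat.Hom.hom h, fun h ↦ ModuleCat.hom_ext h⟩
  | succ i =>
    change (∃ g, P.complex.d (i + 1) i ≫ g = ModuleCat.ofHom f) ↔ _
    rw [complex_d, mem_coboundaries_succ]
    exact ⟨fun ⟨g, hg⟩ ↦ ⟨g.hom, congrArg ModuleCat.Hom.hom hg⟩,
      fun ⟨g, hg⟩ ↦ ⟨ModuleCat.ofHom g, ModuleCat.hom_ext hg⟩⟩

lemma nonempty_extGroup_linearEquiv (P : ModuleResolution R M) (i : ℕ) :
    Nonempty (extGroup k R (ModuleCat.of R M) (ModuleCat.of R N) i ≃ₗ[k]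
      P.cocycles k N i ⧸ (P.coboundaries k N i).submoduleOf (P.cocycles k N i)) := by
  let K := P.complex.linearYonedaObj k (ModuleCat.of R N)
  let S := K.sc' (i - 1) i (i + 1)
  have extIsoHomology : extGroup k R (ModuleCat.of R M) (ModuleCat.of R N) i ≅ S.homology :=
    P.toProjectiveResolution.isoExt (R := k) i (ModuleCat.of R N) ≪≫
      ShortComplex.homologyMapIso (K.isoSc' (i - 1) i (i + 1) (by cases i <;> simp) (by simp))
  let cocycleEquiv : LinearMap.ker S.g.hom ≃ₗ[k] P.cocycles k N i :=
    (P.linearYonedaEquiv k N i).ofSubmodules _ _ (P.map_linearYonedaEquiv_ker k N i)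
  refine ⟨(extIsoHomology ≪≫ S.moduleCatHomologyIso).toLinearEquiv.trans
    (Submodule.Quotient.equiv _ _ cocycleEquiv ?_)⟩
  ext f
  rw [Submodule.mem_map_equiv, Submodule.submoduleOf, Submodule.mem_comap,
    ← P.map_linearYonedaEquiv_range k N, Submodule.mem_map_equiv]
  exact exists_congr fun g ↦ Subtype.ext_iff

variable {k N}

lemma subsingleton_extGroup_iff (P : ModuleResolution R M) (i : ℕ) :
    Subsingleton (extGroup k R (ModuleCat.of R M) (ModuleCat.of R N) i) ↔
      P.cocycles k N i ≤ P.coboundaries k N i := by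
  obtain ⟨e⟩ := P.nonempty_extGroup_linearEquiv k N i
  rw [e.toEquiv.subsingleton_congr, Submodule.Quotient.subsingleton_iff,
    Submodule.submoduleOf_eq_top]

lemma nonempty_extGroup_linearEquiv_field_iff (P : ModuleResolution R M) (i : ℕ) :
    Nonempty (extGroup k R (ModuleCat.of R M) (ModuleCat.of R N) i ≃ₗ[k] k) ↔
      ∃ f₀ ∈ P.cocycles k N i, f₀ ∉ P.coboundaries k N i ∧
        ∀ f ∈ P.cocycles k N i, ∃ c : k, f - c • f₀ ∈ P.coboundaries k N i := by
  obtain ⟨e⟩ := P.nonempty_extGroup_linearEquiv k N i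
  have mk_eq_zero (f : P.cocycles k N i) :
      Submodule.Quotient.mk (p := (P.coboundaries k N i).submoduleOf (P.cocycles k N i)) f = 0 ↔
        f.1 ∈ P.coboundaries k N i := Submodule.Quotient.mk_eq_zero _
  have linearEquiv_iff : Nonempty (extGroup k R (ModuleCat.of R M) (ModuleCat.of R N) i ≃ₗ[k] k) ↔
      Module.finrank k (extGroup k R (ModuleCat.of R M) (ModuleCat.of R N) i) = 1 :=
    ⟨fun ⟨e'⟩ ↦ e'.finrank_eq.trans (Module.finrank_self k), fun h ↦
      (Module.nonempty_linearEquiv_of_finrank_eq_one h).map LinearEquiv.symm⟩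
  rw [linearEquiv_iff, e.finrank_eq, finrank_eq_one_iff']
  constructor
  · rintro ⟨q, hq, hspan⟩
    obtain ⟨f₀, rfl⟩ := Submodule.Quotient.mk_surjective _ q
    refine ⟨f₀, f₀.2, (mk_eq_zero f₀).not.1 hq, fun f hf ↦ ?_⟩
    obtain ⟨c, hc⟩ := hspan (Submodule.Quotient.mk ⟨f, hf⟩)
    exact ⟨c, (mk_eq_zero ((⟨f, hf⟩ : P.cocycles k N i) - c • f₀)).1 (sub_eq_zero.2 hc.symm)⟩
  · rintro ⟨f₀, hf₀, hne, hspan⟩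
    refine ⟨Submodule.Quotient.mk ⟨f₀, hf₀⟩, (mk_eq_zero _).not.2 hne, fun q ↦ ?_⟩
    obtain ⟨f, rfl⟩ := Submodule.Quotient.mk_surjective _ q
    obtain ⟨c, hc⟩ := hspan f f.2
    exact ⟨c, (sub_eq_zero.1 ((mk_eq_zero (f - c • ⟨f₀, hf₀⟩)).2 hc)).symm⟩

end Ext

end ModuleResolution

lemma subsingleton_extGroup_of_projDim_lt (k : Type u) [Field k] {R : Type u} [Ring R]
    [Algebra k R] {M : ModuleCat.{u} R} (N : ModuleCat.{u} R) {i : ℕ} (h : M.projDim < i) :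
    Subsingleton (extGroup k R M N i) := by
  obtain ⟨n, ⟨P, hP⟩, hn⟩ := sInf_lt_iff.1 h
  have isZero_homology : IsZero ((P.complex.linearYonedaObj k N).homology i) := by
    rw [← HomologicalComplex.exactAt_iff_isZero_homology, HomologicalComplex.exactAt_iff]
    refine ShortComplex.exact_of_isZero_X₂ _ ((IsZero.iff_id_eq_zero _).2 ?_)
    ext f
    exact (hP i hn).eq_of_src _ _
  exact ModuleCat.subsingleton_of_isZero (isZero_homology.of_iso (P.isoExt (R := k) i N))

/-! ### Self-dual resolutions -/

/-- A differential `d` on a `k`-space whose homology is one-dimensional, with `φ` inducing the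
isomorphism of the homology with `k`. -/
structure IsHomologyFunctional {k V : Type*} [Field k] [AddCommGroup V] [Module k V]
    (d : V →ₗ[k] V) (φ : V →ₗ[k] k) : Prop where
  d_d : ∀ x, d (d x) = 0
  functional_d : ∀ x, φ (d x) = 0
  exists_cycle : ∃ v, d v = 0 ∧ φ v = 1
  exact : ∀ x, d x = 0 → φ x = 0 → x ∈ LinearMap.range d

namespace IsHomologyFunctional

variable {k V W : Type*} [Field k] [AddCommGroup V] [Module k V] [AddCommGroup W] [Module k W]
  {d : V →ₗ[k] V} {φ : V →ₗ[k] k} {d' : W →ₗ[k] W} {φ' : W →ₗ[k] k}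

lemma of_equiv (h : IsHomologyFunctional d φ) (e : V ≃ₗ[k] W) (hd : ∀ x, d' (e x) = e (d x))
    (hφ : ∀ x, φ' (e x) = φ x) : IsHomologyFunctional d' φ' where
  d_d y := by
    obtain ⟨x, rfl⟩ := e.surjective y
    rw [hd, hd, h.d_d, map_zero]
  functional_d y := by
    obtain ⟨x, rfl⟩ := e.surjective y
    rw [hd, hφ, h.functional_d]
  exists_cycle := by
    obtain ⟨v, hdv, hφv⟩ := h.exists_cycle
    exact ⟨e v, by rw [hd, hdv, map_zero], by rw [hφ, hφv]⟩
  exact y hdy hφy := by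
    obtain ⟨x, rfl⟩ := e.surjective y
    rw [hd, e.map_eq_zero_iff] at hdy
    obtain ⟨z, rfl⟩ := h.exact x hdy (by rwa [hφ] at hφy)
    exact ⟨e z, hd z⟩

lemma exists_homotopy (h : IsHomologyFunctional d φ) {v : V} (hdv : d v = 0) (hφv : φ v = 1) :
    ∃ S : V →ₗ[k] V, ∀ x, d (S x) + S (d x) = x - φ x • v := by
  obtain ⟨s₀, hs₀⟩ := d.rangeRestrict.exists_rightInverse_of_surjective d.range_rangeRestrict
  let s : LinearMap.range d →ₗ[k] V := s₀ - (φ ∘ₗ s₀).smulRight v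
  have d_s₀ (r) : d (s₀ r) = r := congrArg Subtype.val (LinearMap.congr_fun hs₀ r)
  have d_s (r) : d (s r) = r := by simp [s, hdv, d_s₀]
  have φ_s (r) : φ (s r) = 0 := by simp [s, hφv]
  let u : V →ₗ[k] V := LinearMap.id - φ.smulRight v - s ∘ₗ d.rangeRestrict
  let U : V →ₗ[k] LinearMap.range d := u.codRestrict _ fun x ↦
    h.exact (u x) (by simp [u, hdv, d_s]) (by simp [u, hφv, φ_s])
  have d_sU (x) : d (s (U x)) = x - φ x • v - s (d.rangeRestrict x) := d_s (U x)
  have U_d (x) : U (d x) = d.rangeRestrict x := by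
    have : d.rangeRestrict (d x) = 0 := Subtype.ext (h.d_d x)
    exact Subtype.ext (by simp [U, u, h.functional_d, this])
  refine ⟨s ∘ₗ U, fun x ↦ ?_⟩
  rw [LinearMap.comp_apply, LinearMap.comp_apply, d_sU, U_d]
  abel

/-- The differential `d ⊗ 1 + σ ⊗ d'` on a tensor product, `σ` being the sign operator. -/
noncomputable abbrev tensorDifferential (d σ : V →ₗ[k] V) (d' : W →ₗ[k] W) :
    V ⊗[k] W →ₗ[k] V ⊗[k] W :=
  TensorProduct.map d LinearMap.id + TensorProduct.map σ d'

-- `1 ⊗ S`, with `S` contracting the second factor onto `v'`, reduces a cycle to one in `V ⊗ v'`.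
lemma tensor_exact (h : IsHomologyFunctional d φ) (h' : IsHomologyFunctional d' φ')
    {σ : V →ₗ[k] V} (hσσ : ∀ x, σ (σ x) = x) (hσd : ∀ x, σ (d x) = -d (σ x)) (x : V ⊗[k] W)
    (hdx : tensorDifferential d σ d' x = 0)
    (hφx : (LinearMap.mul' k k ∘ₗ TensorProduct.map φ φ') x = 0) :
    x ∈ LinearMap.range (tensorDifferential d σ d') := by
  obtain ⟨v', hdv', hφv'⟩ := h'.exists_cycle
  obtain ⟨S, hS⟩ := h'.exists_homotopy hdv' hφv'
  let H : V ⊗[k] W →ₗ[k] V ⊗[k] W := TensorProduct.map σ S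
  let Y : V ⊗[k] W →ₗ[k] V := TensorProduct.rid k V ∘ₗ TensorProduct.map LinearMap.id φ'
  have homotopy : tensorDifferential d σ d' ∘ₗ H + H ∘ₗ tensorDifferential d σ d' =
      LinearMap.id - (TensorProduct.mk k V W).flip v' ∘ₗ Y := by
    refine TensorProduct.ext' fun a b ↦ ?_
    have hab := congrArg (fun t ↦ a ⊗ₜ[k] t) (hS b)
    simp only [TensorProduct.tmul_add, TensorProduct.tmul_sub] at hab
    simp only [H, Y, LinearMap.add_apply, LinearMap.comp_apply, LinearMap.sub_apply,
      LinearMap.id_apply, LinearMap.flip_apply, TensorProduct.mk_apply, TensorProduct.map_tmul,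
      LinearEquiv.coe_coe, TensorProduct.rid_tmul, map_add, hσσ, hσd, TensorProduct.neg_tmul,
      TensorProduct.smul_tmul]
    rw [← hab]
    abel
  have d_Y : d ∘ₗ Y = Y ∘ₗ tensorDifferential d σ d' :=
    TensorProduct.ext' fun a b ↦ by simp [Y, h'.functional_d]
  have φ_Y : φ ∘ₗ Y = LinearMap.mul' k k ∘ₗ TensorProduct.map φ φ' :=
    TensorProduct.ext' fun a b ↦ by simp [Y, mul_comm]
  obtain ⟨z, hz⟩ := h.exact (Y x)
    (by rw [← LinearMap.comp_apply, d_Y, LinearMap.comp_apply, hdx, map_zero])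
    (by rw [← LinearMap.comp_apply, φ_Y, hφx])
  have homotopy_x : tensorDifferential d σ d' (H x) = x - Y x ⊗ₜ v' := by
    simpa [hdx] using LinearMap.congr_fun homotopy x
  have d_z : tensorDifferential d σ d' (z ⊗ₜ v') = Y x ⊗ₜ v' := by simp [hdv', hz]
  exact ⟨H x + z ⊗ₜ v', by rw [map_add, homotopy_x, d_z, sub_add_cancel]⟩

lemma tensor (h : IsHomologyFunctional d φ) (h' : IsHomologyFunctional d' φ') {σ : V →ₗ[k] V}
    (hσσ : ∀ x, σ (σ x) = x) (hσd : ∀ x, σ (d x) = -d (σ x)) :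
    IsHomologyFunctional (tensorDifferential d σ d')
      (LinearMap.mul' k k ∘ₗ TensorProduct.map φ φ') where
  d_d := LinearMap.congr_fun (g := 0)
    (f := tensorDifferential d σ d' ∘ₗ tensorDifferential d σ d') <|
    TensorProduct.ext' fun a b ↦ by simp [hσd, h.d_d, h'.d_d, TensorProduct.neg_tmul]
  functional_d := LinearMap.congr_fun (g := 0)
    (f := (LinearMap.mul' k k ∘ₗ TensorProduct.map φ φ') ∘ₗ tensorDifferential d σ d') <|
    TensorProduct.ext' fun a b ↦ by simp [h.functional_d, h'.functional_d]
  exists_cycle := by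
    obtain ⟨v, hdv, hφv⟩ := h.exists_cycle
    obtain ⟨v', hdv', hφv'⟩ := h'.exists_cycle
    exact ⟨v ⊗ₜ v', by simp [hdv, hdv'], by simp [hφv, hφv']⟩
  exact := h.tensor_exact h' hσσ hσd

end IsHomologyFunctional

section PiTensor

open scoped Kronecker

variable (k : Type*) [Field k] (R R' : Type*) [Ring R] [Algebra k R] [Ring R'] [Algebra k R']
  (ι ι' : Type*) [Fintype ι] [Fintype ι']

/-- The identification of `R^ι ⊗ R'^ι'` with `(R ⊗ R')^(ι × ι')`. -/
noncomputable def piTensorPiEquiv : (ι → R) ⊗[k] (ι' → R') ≃ₗ[k] (ι × ι' → R ⊗[k] R') :=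
  (TensorProduct.congr (Finsupp.linearEquivFunOnFinite k R ι).symm
    (Finsupp.linearEquivFunOnFinite k R' ι').symm).trans
    ((finsuppTensorFinsupp k k R R' ι ι').trans (Finsupp.linearEquivFunOnFinite k _ _))

variable {k R R' ι ι'}

lemma piTensorPiEquiv_tmul (x : ι → R) (y : ι' → R') :
    piTensorPiEquiv k R R' ι ι' (x ⊗ₜ y) = fun p ↦ x p.1 ⊗ₜ y p.2 := by
  ext ⟨i, j⟩
  exact finsuppTensorFinsupp_apply k k R R' ι ι' _ _ i j

lemma piTensorPiEquiv_vecMul_kroneckerTMul (M : Matrix ι ι R) (N : Matrix ι' ι' R')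
    (x : ι → R) (y : ι' → R') :
    Matrix.vecMul (piTensorPiEquiv k R R' ι ι' (x ⊗ₜ y)) (M ⊗ₖₜ[k] N) =
      piTensorPiEquiv k R R' ι ι' (Matrix.vecMul x M ⊗ₜ Matrix.vecMul y N) := by
  ext ⟨j, j'⟩
  simp only [piTensorPiEquiv_tmul, Matrix.vecMul, dotProduct, Matrix.kroneckerTMul_apply,
    Algebra.TensorProduct.tmul_mul_tmul, Fintype.sum_prod_type_right,
    TensorProduct.sum_tmul, TensorProduct.tmul_sum]

lemma piTensorPiEquiv_kroneckerTMul_mulVec (M : Matrix ι ι R) (N : Matrix ι' ι' R')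
    (x : ι → R) (y : ι' → R') :
    Matrix.mulVec (M ⊗ₖₜ[k] N) (piTensorPiEquiv k R R' ι ι' (x ⊗ₜ y)) =
      piTensorPiEquiv k R R' ι ι' (Matrix.mulVec M x ⊗ₜ Matrix.mulVec N y) := by
  ext ⟨j, j'⟩
  simp only [piTensorPiEquiv_tmul, Matrix.mulVec, dotProduct, Matrix.kroneckerTMul_apply,
    Algebra.TensorProduct.tmul_mul_tmul, Fintype.sum_prod_type_right,
    TensorProduct.sum_tmul, TensorProduct.tmul_sum]

end PiTensor

/-- A finite free resolution of the trivial module of `(R, ε)` of length `n` whose dual is again,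
up to a shift by `n`, a resolution of the trivial module on the other side. All the differentials
are collected into one square matrix `D` on the set `ι` of all basis elements, graded by `deg`:
row vectors times `D` form the resolution, with augmentation `ε` of the coordinate `bot`, and `D`
times column vectors is the dual complex, with augmentation `ε` of the coordinate `top`. -/
structure PoincareDualResolution {k : Type u} [Field k] {R : Type u} [Ring R] [Algebra k R]
    (ε : R →ₐ[k] k) (n : ℕ) where
  ι : Type u
  [fintype : Fintype ι]
  [decidableEq : DecidableEq ι]
  deg : ι → ℕ
  deg_le : ∀ i, deg i ≤ n
  D : Matrix ι ι R
  deg_eq : ∀ i j, D i j ≠ 0 → deg i = deg j + 1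
  bot : ι
  top : ι
  deg_bot : deg bot = 0
  deg_top : deg top = n
  row : IsHomologyFunctional ((Matrix.vecMulBilin k k).flip D)
    (ε.toLinearMap ∘ₗ LinearMap.proj bot)
  col : IsHomologyFunctional (Matrix.mulVecBilin k k D) (ε.toLinearMap ∘ₗ LinearMap.proj top)

namespace PoincareDualResolution

attribute [instance] fintype decidableEq

variable {k : Type u} [Field k] {R : Type u} [Ring R] [Algebra k R] {ε : R →ₐ[k] k} {n : ℕ}

/-- The opposite resolution: rows and columns are exchanged, and degree `i` becomes `n - i`. -/
def op (P : PoincareDualResolution ε n) : PoincareDualResolution (mopAug ε) n where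
  ι := P.ι
  deg i := n - P.deg i
  deg_le i := Nat.sub_le _ _
  D := P.D.transpose.map MulOpposite.op
  deg_eq i j h := by
    have := P.deg_eq j i fun h₀ ↦ h (congrArg MulOpposite.op h₀)
    have := P.deg_le j
    omega
  bot := P.top
  top := P.bot
  deg_bot := by rw [P.deg_top, Nat.sub_self]
  deg_top := by rw [P.deg_bot, Nat.sub_zero]
  row := P.col.of_equiv (LinearEquiv.piCongrRight fun _ ↦ MulOpposite.opLinearEquiv k)
    (fun x ↦ by ext j; simp [Matrix.vecMul, Matrix.mulVec, dotProduct]) fun _ ↦ rfl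
  col := P.row.of_equiv (LinearEquiv.piCongrRight fun _ ↦ MulOpposite.opLinearEquiv k)
    (fun x ↦ by ext j; simp [Matrix.vecMul, Matrix.mulVec, dotProduct]) fun _ ↦ rfl

/-- The diagonal matrix of the signs `(-1) ^ deg`. -/
def sign (P : PoincareDualResolution ε n) : Matrix P.ι P.ι R :=
  Matrix.diagonal fun i ↦ (-1) ^ P.deg i

lemma sign_mul_sign (P : PoincareDualResolution ε n) : P.sign * P.sign = 1 := by
  rw [sign, Matrix.diagonal_mul_diagonal, ← Matrix.diagonal_one]
  congr
  ext i
  rw [← pow_add, Even.neg_one_pow ⟨_, rfl⟩]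

lemma sign_mul_D (P : PoincareDualResolution ε n) : P.sign * P.D = -(P.D * P.sign) := by
  ext i j
  simp only [sign, Matrix.diagonal_mul, Matrix.neg_apply, Matrix.mul_diagonal]
  by_cases h : P.D i j = 0
  · simp [h]
  · rw [P.deg_eq i j h, pow_succ, mul_neg_one, neg_mul,
      ((Commute.neg_one_left (P.D i j)).pow_left _).eq]

section Tensor

open scoped Kronecker

variable {R' : Type u} [Ring R'] [Algebra k R'] {ε' : R' →ₐ[k] k} {n' : ℕ}

/-- The differential `D ⊗ 1 + (-1) ^ deg ⊗ D'` of the tensor product of two resolutions. -/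
noncomputable def tensorD (P : PoincareDualResolution ε n) (P' : PoincareDualResolution ε' n') :
    Matrix (P.ι × P'.ι) (P.ι × P'.ι) (R ⊗[k] R') :=
  P.D ⊗ₖₜ[k] (1 : Matrix P'.ι P'.ι R') + P.sign ⊗ₖₜ[k] P'.D

lemma deg_eq_of_tensorD_ne_zero (P : PoincareDualResolution ε n)
    (P' : PoincareDualResolution ε' n') (p q : P.ι × P'.ι) (h : P.tensorD P' p q ≠ 0) :
    P.deg p.1 + P'.deg p.2 = P.deg q.1 + P'.deg q.2 + 1 := by
  contrapose! h
  rw [tensorD, Matrix.add_apply, Matrix.kroneckerTMul_apply, Matrix.kroneckerTMul_apply, sign]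
  have left : P.D p.1 q.1 ⊗ₜ[k] (1 : Matrix P'.ι P'.ι R') p.2 q.2 = 0 := by
    by_cases hD : P.D p.1 q.1 = 0
    · rw [hD, TensorProduct.zero_tmul]
    · have hne : p.2 ≠ q.2 := fun e ↦ h (by rw [P.deg_eq _ _ hD, e]; omega)
      rw [Matrix.one_apply_ne hne, TensorProduct.tmul_zero]
  have right : Matrix.diagonal (fun i ↦ (-1 : R) ^ P.deg i) p.1 q.1 ⊗ₜ[k] P'.D p.2 q.2 = 0 := by
    by_cases hD : P'.D p.2 q.2 = 0
    · rw [hD, TensorProduct.tmul_zero]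
    · have hne : p.1 ≠ q.1 := fun e ↦ h (by rw [P'.deg_eq _ _ hD, e]; omega)
      rw [Matrix.diagonal_apply_ne _ hne, TensorProduct.zero_tmul]
  rw [left, right, add_zero]

lemma productMap_proj_piTensorPiEquiv {ι ι' : Type u} [Fintype ι] [Fintype ι'] (i : ι) (i' : ι')
    (x : (ι → R) ⊗[k] (ι' → R')) :
    ((Algebra.TensorProduct.productMap ε ε').toLinearMap ∘ₗ LinearMap.proj (i, i'))
        (piTensorPiEquiv k R R' ι ι' x) =
      (LinearMap.mul' k k ∘ₗ TensorProduct.map (ε.toLinearMap ∘ₗ LinearMap.proj i)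
        (ε'.toLinearMap ∘ₗ LinearMap.proj i')) x := by
  induction x with
  | zero => simp only [map_zero]
  | add x y hx hy => simp only [map_add, hx, hy]
  | tmul x y => simp [piTensorPiEquiv_tmul]

lemma vecMul_tensorD (P : PoincareDualResolution ε n) (P' : PoincareDualResolution ε' n')
    (x : (P.ι → R) ⊗[k] (P'.ι → R')) :
    (Matrix.vecMulBilin k k).flip (P.tensorD P') (piTensorPiEquiv k R R' P.ι P'.ι x) =
      piTensorPiEquiv k R R' P.ι P'.ι (IsHomologyFunctional.tensorDifferential
        ((Matrix.vecMulBilin k k).flip P.D) ((Matrix.vecMulBilin k k).flip P.sign)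
        ((Matrix.vecMulBilin k k).flip P'.D) x) := by
  induction x with
  | zero => simp only [map_zero]
  | add x y hx hy => simp only [map_add, hx, hy]
  | tmul x y => simp [tensorD, piTensorPiEquiv_vecMul_kroneckerTMul]

lemma mulVec_tensorD (P : PoincareDualResolution ε n) (P' : PoincareDualResolution ε' n')
    (x : (P.ι → R) ⊗[k] (P'.ι → R')) :
    Matrix.mulVecBilin k k (P.tensorD P') (piTensorPiEquiv k R R' P.ι P'.ι x) =
      piTensorPiEquiv k R R' P.ι P'.ι (IsHomologyFunctional.tensorDifferential
        (Matrix.mulVecBilin k k P.D) (Matrix.mulVecBilin k k P.sign)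
        (Matrix.mulVecBilin k k P'.D) x) := by
  induction x with
  | zero => simp only [map_zero]
  | add x y hx hy => simp only [map_add, hx, hy]
  | tmul x y => simp [tensorD, piTensorPiEquiv_kroneckerTMul_mulVec]

/-- The tensor product of two resolutions, whose top and bottom are the products of theirs. -/
noncomputable def tensor (P : PoincareDualResolution ε n) (P' : PoincareDualResolution ε' n') :
    PoincareDualResolution (Algebra.TensorProduct.productMap ε ε') (n + n') where
  ι := P.ι × P'.ι
  deg p := P.deg p.1 + P'.deg p.2
  deg_le p := add_le_add (P.deg_le _) (P'.deg_le _)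
  D := P.tensorD P'
  deg_eq := P.deg_eq_of_tensorD_ne_zero P'
  bot := (P.bot, P'.bot)
  top := (P.top, P'.top)
  deg_bot := by rw [P.deg_bot, P'.deg_bot]
  deg_top := by rw [P.deg_top, P'.deg_top]
  row := (P.row.tensor P'.row (by simp [sign_mul_sign])
    fun x ↦ by simp [← Matrix.vecMul_neg, sign_mul_D]).of_equiv _ (P.vecMul_tensorD P')
      (productMap_proj_piTensorPiEquiv _ _)
  col := (P.col.tensor P'.col (by simp [sign_mul_sign])
    fun x ↦ by simp [← Matrix.neg_mulVec, sign_mul_D]).of_equiv _ (P.mulVec_tensorD P')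
      (productMap_proj_piTensorPiEquiv _ _)

end Tensor

end PoincareDualResolution

section Support

variable {R ι α β : Type*} [Ring R] [Fintype ι] [Fintype α] {a : α → ι} {b : β → ι}
  {D : Matrix ι ι R}

lemma vecMul_comp_of_support (ha : Function.Injective a) (b : β → ι)
    (hD : ∀ i ∉ Set.range a, ∀ j, D i (b j) = 0) (f : ι → R) :
    Matrix.vecMul f D ∘ b = Matrix.vecMul (f ∘ a) (D.submatrix a b) := by
  ext j
  exact (Fintype.sum_of_injective a ha _ _ (fun i hi ↦ mul_eq_zero_of_right _ (hD i hi j))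
    fun _ ↦ rfl).symm

lemma mulVec_comp_of_support (ha : Function.Injective a) (b : β → ι)
    (hD : ∀ j ∉ Set.range a, ∀ i, D (b i) j = 0) (g : ι → R) :
    Matrix.mulVec D g ∘ b = Matrix.mulVec (D.submatrix b a) (g ∘ a) := by
  ext i
  exact (Fintype.sum_of_injective a ha _ _ (fun j hj ↦ mul_eq_zero_of_left (hD j hj i) _)
    fun _ ↦ rfl).symm

lemma vecMul_extend_zero (ha : Function.Injective a) (hb : Function.Injective b)
    (hD : ∀ j ∉ Set.range b, ∀ i, D (a i) j = 0) (x : α → R) :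
    Matrix.vecMul (Function.extend a x 0) D =
      Function.extend b (Matrix.vecMul x (D.submatrix a b)) 0 := by
  ext j
  have sum_eq : Matrix.vecMul (Function.extend a x 0) D j = ∑ i, x i * D (a i) j :=
    (Fintype.sum_of_injective a ha _ _
      (fun i hi ↦ by rw [Function.extend_apply' _ _ _ hi, Pi.zero_apply, zero_mul])
      fun i ↦ by rw [ha.extend_apply]).symm
  rw [sum_eq]
  by_cases hj : j ∈ Set.range b
  · obtain ⟨j, rfl⟩ := hj
    rw [hb.extend_apply]
    rfl
  · rw [Function.extend_apply' _ _ _ hj]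
    exact Finset.sum_eq_zero fun i _ ↦ by rw [hD j hj, mul_zero]

lemma mulVec_extend_zero (ha : Function.Injective a) (hb : Function.Injective b)
    (hD : ∀ i ∉ Set.range b, ∀ j, D i (a j) = 0) (x : α → R) :
    Matrix.mulVec D (Function.extend a x 0) =
      Function.extend b (Matrix.mulVec (D.submatrix b a) x) 0 := by
  ext i
  have sum_eq : Matrix.mulVec D (Function.extend a x 0) i = ∑ j, D i (a j) * x j :=
    (Fintype.sum_of_injective a ha _ _
      (fun j hj ↦ by rw [Function.extend_apply' _ _ _ hj, Pi.zero_apply, mul_zero])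
      fun j ↦ by rw [ha.extend_apply]).symm
  rw [sum_eq]
  by_cases hi : i ∈ Set.range b
  · obtain ⟨i, rfl⟩ := hi
    rw [hb.extend_apply]
    rfl
  · rw [Function.extend_apply' _ _ _ hi]
    exact Finset.sum_eq_zero fun j _ ↦ by rw [hD i hi, zero_mul]

lemma linearCombination_comp_vecMulLinear [Fintype β] (M : Matrix α β R) (v : β → R) :
    Fintype.linearCombination R v ∘ₗ M.vecMulLinear =
      Fintype.linearCombination R (Matrix.mulVec M v) :=
  LinearMap.ext fun x ↦ (Matrix.dotProduct_mulVec x M v).symm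

lemma exists_eq_linearCombination {M : Type*} [AddCommGroup M] [Module R M]
    (f : (α → R) →ₗ[R] M) : ∃ v, f = Fintype.linearCombination R v := by
  classical
  refine ⟨fun i ↦ f (Pi.single i 1), LinearMap.pi_ext' fun i ↦ LinearMap.ext_ring ?_⟩
  simp [Fintype.linearCombination_apply, Pi.single_apply]

lemma linearCombination_injective {M : Type*} [AddCommGroup M] [Module R M] :
    Function.Injective (Fintype.linearCombination R : (α → M) → _) := fun v w h ↦ by
  classical
  ext i
  simpa [Fintype.linearCombination_apply, Pi.single_apply] using
    LinearMap.congr_fun h (Pi.single i 1)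

end Support

section Augmentation

variable {k : Type u} [Field k] {R : Type u} [Ring R] [Algebra k R] {ε : R →ₐ[k] k} [Module R k]

/-- The augmentation as a map of left modules, for an `R`-module structure on `k` acting
through `ε`. -/
def augLinearMap (hk : ∀ (r : R) (c : k), r • c = ε r * c) : R →ₗ[R] k where
  toFun := ε
  map_add' := map_add ε
  map_smul' r s := by rw [smul_eq_mul, map_mul, RingHom.id_apply, hk]

lemma isScalarTower_of_aug (hk : ∀ (r : R) (c : k), r • c = ε r * c) : IsScalarTower k R k :=
  ⟨fun c r x ↦ by rw [hk, hk, map_smul, smul_eq_mul, smul_eq_mul, mul_assoc]⟩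

end Augmentation

namespace PoincareDualResolution

variable {k : Type u} [Field k] {R : Type u} [Ring R] [Algebra k R] {ε : R →ₐ[k] k} {n : ℕ}

/-- The indices of degree `m`: a basis of the `m`-th term of the resolution. -/
abbrev Piece (P : PoincareDualResolution ε n) (m : ℕ) : Type u := {i // P.deg i = m}

/-- The block of `D` from degree `m + 1` to degree `m`. -/
abbrev block (P : PoincareDualResolution ε n) (m : ℕ) : Matrix (P.Piece (m + 1)) (P.Piece m) R :=
  P.D.submatrix Subtype.val Subtype.val

lemma D_eq_zero (P : PoincareDualResolution ε n) {i j : P.ι} (h : P.deg i ≠ P.deg j + 1) :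
    P.D i j = 0 :=
  not_not.1 fun h₀ ↦ h (P.deg_eq i j h₀)

lemma notMem_range_piece {P : PoincareDualResolution ε n} {m : ℕ} {i : P.ι} :
    i ∉ Set.range (Subtype.val : P.Piece m → P.ι) ↔ P.deg i ≠ m := by
  simp

lemma extend_piece_eq_zero {P : PoincareDualResolution ε n} {m : ℕ} (x : P.Piece m → R) {i : P.ι}
    (h : P.deg i ≠ m) : Function.extend Subtype.val x 0 i = 0 :=
  Function.extend_apply' _ _ _ (notMem_range_piece.2 h)

lemma vecMul_D_comp_val (P : PoincareDualResolution ε n) (m : ℕ) (f : P.ι → R) :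
    Matrix.vecMul f P.D ∘ (Subtype.val : P.Piece m → P.ι) =
      Matrix.vecMul (f ∘ Subtype.val) (P.block m) :=
  vecMul_comp_of_support Subtype.val_injective _
    (fun i hi j ↦ P.D_eq_zero fun e ↦ notMem_range_piece.1 hi (by rw [e, j.2])) f

lemma D_mulVec_comp_val (P : PoincareDualResolution ε n) (m : ℕ) (g : P.ι → R) :
    Matrix.mulVec P.D g ∘ (Subtype.val : P.Piece (m + 1) → P.ι) =
      Matrix.mulVec (P.block m) (g ∘ Subtype.val) :=
  mulVec_comp_of_support Subtype.val_injective _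
    (fun _ hj i ↦ P.D_eq_zero fun e ↦
      notMem_range_piece.1 hj (Nat.succ_injective (e.symm.trans i.2))) g

lemma D_mulVec_eq_zero_of_deg_eq_zero (P : PoincareDualResolution ε n) (g : P.ι → R) {i : P.ι}
    (hi : P.deg i = 0) : Matrix.mulVec P.D g i = 0 :=
  Finset.sum_eq_zero fun j _ ↦ mul_eq_zero_of_left (P.D_eq_zero (by omega)) _

lemma vecMul_extend (P : PoincareDualResolution ε n) {m : ℕ} (x : P.Piece (m + 1) → R) :
    Matrix.vecMul (Function.extend Subtype.val x 0) P.D =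
      Function.extend Subtype.val (Matrix.vecMul x (P.block m)) 0 :=
  vecMul_extend_zero Subtype.val_injective Subtype.val_injective
    (fun _ hj i ↦ P.D_eq_zero fun e ↦
      notMem_range_piece.1 hj (Nat.succ_injective (e.symm.trans i.2))) x

lemma vecMul_extend_of_piece_zero (P : PoincareDualResolution ε n) (x : P.Piece 0 → R) :
    Matrix.vecMul (Function.extend Subtype.val x 0) P.D = 0 := by
  ext j
  refine Finset.sum_eq_zero fun i _ ↦ ?_
  by_cases hi : P.deg i = 0
  · exact mul_eq_zero_of_right _ (P.D_eq_zero (by omega))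
  · rw [extend_piece_eq_zero x hi, zero_mul]

lemma D_mulVec_extend (P : PoincareDualResolution ε n) {m : ℕ} (v : P.Piece m → R) :
    Matrix.mulVec P.D (Function.extend Subtype.val v 0) =
      Function.extend Subtype.val (Matrix.mulVec (P.block m) v) 0 :=
  mulVec_extend_zero Subtype.val_injective Subtype.val_injective
    (fun i hi j ↦ P.D_eq_zero fun e ↦ notMem_range_piece.1 hi (by rw [e, j.2])) v

lemma mem_range_block_of_vecMul_eq_zero (P : PoincareDualResolution ε n) {m : ℕ}
    (x : P.Piece m → R) (hD : Matrix.vecMul (Function.extend Subtype.val x 0) P.D = 0)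
    (hε : ε (Function.extend Subtype.val x 0 P.bot) = 0) :
    ∃ y, Matrix.vecMul y (P.block m) = x := by
  obtain ⟨g, hg⟩ := P.row.exact _ hD hε
  refine ⟨g ∘ Subtype.val, ?_⟩
  rw [← vecMul_D_comp_val, ← Function.extend_comp Subtype.val_injective x 0]
  exact congrArg (· ∘ Subtype.val) hg

lemma vecMul_block_vecMul_block (P : PoincareDualResolution ε n) {m : ℕ}
    (y : P.Piece (m + 2) → R) :
    Matrix.vecMul (Matrix.vecMul y (P.block (m + 1))) (P.block m) = 0 := by
  have hd := P.row.d_d (Function.extend Subtype.val y 0)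
  change Matrix.vecMul (Matrix.vecMul _ P.D) P.D = 0 at hd
  rw [vecMul_extend, vecMul_extend] at hd
  rw [← Function.extend_comp Subtype.val_injective (Matrix.vecMul _ (P.block m)) 0, hd]
  rfl

lemma isEmpty_piece (P : PoincareDualResolution ε n) {m : ℕ} (hm : n < m) :
    IsEmpty (P.Piece m) :=
  ⟨fun i ↦ (P.deg_le i).not_gt (i.2.symm ▸ hm)⟩

lemma extend_bot (P : PoincareDualResolution ε n) (x : P.Piece 0 → R) :
    Function.extend Subtype.val x 0 P.bot = x ⟨P.bot, P.deg_bot⟩ :=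
  Subtype.val_injective.extend_apply x 0 (⟨P.bot, P.deg_bot⟩ : P.Piece 0)

lemma extend_top (P : PoincareDualResolution ε n) (x : P.Piece n → R) :
    Function.extend Subtype.val x 0 P.top = x ⟨P.top, P.deg_top⟩ :=
  Subtype.val_injective.extend_apply x 0 (⟨P.top, P.deg_top⟩ : P.Piece n)

variable [Module R k]

section Functional

variable (hk : ∀ (r : R) (c : k), r • c = ε r * c)

/-- The free resolution `R^(Piece 0) ← R^(Piece 1) ← ⋯` of `k`, by rows. -/
noncomputable def toModuleResolution (P : PoincareDualResolution ε n) : ModuleResolution R k where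
  X m := ModuleCat.of R (P.Piece m → R)
  d m := (P.block m).vecMulLinear
  aug := augLinearMap hk ∘ₗ LinearMap.proj (⟨P.bot, P.deg_bot⟩ : P.Piece 0)
  projective m := inferInstanceAs (Module.Projective R (P.Piece m → R))
  aug_surjective c := ⟨fun _ ↦ algebraMap k R c, ε.commutes c⟩
  exact_aug x := by
    constructor
    · intro hx
      refine P.mem_range_block_of_vecMul_eq_zero x (P.vecMul_extend_of_piece_zero x) ?_
      rwa [extend_bot]
    · rintro ⟨y, rfl⟩
      refine Eq.trans ?_ (P.row.functional_d (Function.extend Subtype.val y 0))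
      change ε _ = ε (Matrix.vecMul _ P.D P.bot)
      rw [vecMul_extend, extend_bot]
      rfl
  exact m x := by
    constructor
    · intro (hx : Matrix.vecMul x (P.block m) = 0)
      refine P.mem_range_block_of_vecMul_eq_zero x ?_ ?_
      · rw [vecMul_extend, hx]
        exact Function.extend_const _ 0
      · rw [extend_piece_eq_zero x (by rw [P.deg_bot]; omega), map_zero]
    · rintro ⟨y, rfl⟩
      exact P.vecMul_block_vecMul_block y

/-- The functional on the degree `m` piece of the resolution with column of coefficients `v`. -/
noncomputable def functional (P : PoincareDualResolution ε n) {m : ℕ} (v : P.Piece m → R) :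
    (P.toModuleResolution hk).X m →ₗ[R] R :=
  Fintype.linearCombination R v

lemma functional_d (P : PoincareDualResolution ε n) {m : ℕ} (v : P.Piece m → R) :
    P.functional hk v ∘ₗ (P.toModuleResolution hk).d m =
      P.functional hk (Matrix.mulVec (P.block m) v) :=
  linearCombination_comp_vecMulLinear (P.block m) v

lemma functional_injective (P : PoincareDualResolution ε n) {m : ℕ} :
    Function.Injective (P.functional hk : (P.Piece m → R) → _) :=
  linearCombination_injective

lemma functional_zero (P : PoincareDualResolution ε n) {m : ℕ} :
    P.functional hk (0 : P.Piece m → R) = 0 :=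
  LinearMap.ext fun x ↦ Finset.sum_eq_zero fun i _ ↦ smul_zero (x i)

lemma exists_eq_functional (P : PoincareDualResolution ε n) {m : ℕ}
    (f : (P.toModuleResolution hk).X m →ₗ[R] R) : ∃ v, f = P.functional hk v :=
  exists_eq_linearCombination f

lemma functional_mem_cocycles (P : PoincareDualResolution ε n) {m : ℕ} {v : P.Piece m → R} :
    P.functional hk v ∈ (P.toModuleResolution hk).cocycles k R m ↔
      Matrix.mulVec P.D (Function.extend Subtype.val v 0) = 0 := by
  rw [ModuleResolution.mem_cocycles, functional_d, D_mulVec_extend, ← functional_zero,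
    (P.functional_injective hk).eq_iff]
  constructor
  · intro h
    rw [h]
    exact Function.extend_const _ 0
  · intro h
    rw [← Function.extend_comp Subtype.val_injective (Matrix.mulVec (P.block m) v) 0, h]
    rfl

lemma functional_mem_coboundaries (P : PoincareDualResolution ε n) {m : ℕ} {v : P.Piece m → R} :
    P.functional hk v ∈ (P.toModuleResolution hk).coboundaries k R m ↔
      ∃ g, Matrix.mulVec P.D g ∘ Subtype.val = v := by
  cases m with
  | zero =>
    have D_mulVec_eq (g : P.ι → R) : Matrix.mulVec P.D g ∘ (Subtype.val : P.Piece 0 → P.ι) = 0 :=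
      funext fun i ↦ P.D_mulVec_eq_zero_of_deg_eq_zero g i.2
    simp only [D_mulVec_eq, exists_const]
    change P.functional hk v = 0 ↔ _
    rw [← functional_zero, (P.functional_injective hk).eq_iff, eq_comm]
  | succ m =>
    rw [ModuleResolution.mem_coboundaries_succ]
    constructor
    · rintro ⟨f, hf⟩
      obtain ⟨w, rfl⟩ := P.exists_eq_functional hk f
      refine ⟨Function.extend Subtype.val w 0, P.functional_injective hk ?_⟩
      rw [D_mulVec_comp_val, Function.extend_comp Subtype.val_injective, ← functional_d, hf]
    · rintro ⟨g, rfl⟩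
      exact ⟨P.functional hk (g ∘ Subtype.val), by rw [functional_d, D_mulVec_comp_val]⟩

lemma functional_mem_coboundaries_of_cocycle (P : PoincareDualResolution ε n) {m : ℕ}
    {v : P.Piece m → R} (hv : P.functional hk v ∈ (P.toModuleResolution hk).cocycles k R m)
    (hε : ε (Function.extend Subtype.val v 0 P.top) = 0) :
    P.functional hk v ∈ (P.toModuleResolution hk).coboundaries k R m := by
  rw [functional_mem_cocycles] at hv
  rw [functional_mem_coboundaries]
  obtain ⟨g, hg⟩ := P.col.exact _ hv hε
  refine ⟨g, ?_⟩
  rw [← Function.extend_comp Subtype.val_injective v 0]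
  exact congrArg (· ∘ Subtype.val) hg

lemma mem_cocycles_top (P : PoincareDualResolution ε n)
    (f : (P.toModuleResolution hk).X n →ₗ[R] R) :
    f ∈ (P.toModuleResolution hk).cocycles k R n := by
  have := P.isEmpty_piece n.lt_succ_self
  rw [ModuleResolution.mem_cocycles]
  exact LinearMap.ext fun x ↦
    (congrArg _ (Subsingleton.elim (α := P.Piece (n + 1) → R) x 0)).trans (map_zero _)

end Functional

lemma subsingleton_ext (hk : ∀ (r : R) (c : k), r • c = ε r * c)
    (P : PoincareDualResolution ε n) {m : ℕ} (hm : m ≠ n) :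
    Subsingleton (extGroup k R (ModuleCat.of R k) (ModuleCat.of R R) m) := by
  rw [(P.toModuleResolution hk).subsingleton_extGroup_iff]
  intro f hf
  obtain ⟨v, rfl⟩ := P.exists_eq_functional hk f
  refine P.functional_mem_coboundaries_of_cocycle hk hf ?_
  rw [extend_piece_eq_zero v (by rw [P.deg_top]; exact hm.symm), map_zero]

lemma nonempty_ext_linearEquiv (hk : ∀ (r : R) (c : k), r • c = ε r * c)
    (P : PoincareDualResolution ε n) :
    Nonempty (extGroup k R (ModuleCat.of R k) (ModuleCat.of R R) n ≃ₗ[k] k) := by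
  rw [(P.toModuleResolution hk).nonempty_extGroup_linearEquiv_field_iff]
  let proj : P.Piece n → R := Pi.single ⟨P.top, P.deg_top⟩ 1
  refine ⟨P.functional hk proj, P.mem_cocycles_top hk _, fun h ↦ ?_, fun f _ ↦ ?_⟩
  · obtain ⟨g, hg⟩ := (P.functional_mem_coboundaries hk).1 h
    have top_eq : Matrix.mulVec P.D g P.top = 1 :=
      (congrFun hg ⟨P.top, P.deg_top⟩).trans (Pi.single_eq_same _ _)
    have aug_eq : ε (Matrix.mulVec P.D g P.top) = 0 := P.col.functional_d g
    exact one_ne_zero ((map_one ε).symm.trans (top_eq ▸ aug_eq))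
  · obtain ⟨v, rfl⟩ := P.exists_eq_functional hk f
    let c := ε (v ⟨P.top, P.deg_top⟩)
    have sub_eq : P.functional hk v - c • P.functional hk proj =
        P.functional hk (v - c • proj) := by
      refine LinearMap.ext fun x ↦ ?_
      change ∑ i, x i * v i - c • ∑ i, x i * proj i = ∑ i, x i * (v i - c • proj i)
      simp only [mul_sub, mul_smul_comm, Finset.sum_sub_distrib, Finset.smul_sum]
    refine ⟨c, sub_eq ▸ P.functional_mem_coboundaries_of_cocycle hk (P.mem_cocycles_top hk _) ?_⟩
    rw [extend_top]
    simp [proj, c]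

end PoincareDualResolution

/-! ### Minimal resolutions of the trivial module -/

/-- The left half of Artin–Schelter regularity: `k` has projective dimension at most `n` and
`Ext_R(k, R)` is `k`, concentrated in degree `n`. -/
structure IsLeftGorenstein (k : Type u) [Field k] (R : Type u) [Ring R] [Algebra k R]
    [Module R k] (n : ℕ) : Prop where
  projDim_le : (ModuleCat.of R k).projDim ≤ n
  subsingleton_ext : ∀ i, i ≠ n →
    Subsingleton (extGroup k R (ModuleCat.of R k) (ModuleCat.of R R) i)
  nonempty_ext_linearEquiv :
    Nonempty (extGroup k R (ModuleCat.of R k) (ModuleCat.of R R) n ≃ₗ[k] k)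

/-- A minimal free resolution of the trivial module `k` of `(R, ε)`: the augmentation ideal
contains the entries of all the differentials. -/
structure MinimalResolution {k : Type u} [Field k] {R : Type u} [Ring R] [Algebra k R]
    (ε : R →ₐ[k] k) [Module R k] where
  I : ℕ → Type u
  d : ∀ i, (I (i + 1) →₀ R) →ₗ[R] (I i →₀ R)
  aug : (I 0 →₀ R) →ₗ[R] k
  aug_surjective : Function.Surjective aug
  exact_aug : Function.Exact (d 0) aug
  exact : ∀ i, Function.Exact (d (i + 1)) (d i)
  minimal : ∀ i x l, ε (d i x l) = 0

lemma eq_sum_smul_single {R N J : Type*} [Ring R] [AddCommGroup N] [Module R N] [Fintype J]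
    (g : (J →₀ R) →ₗ[R] N) (x : J →₀ R) : g x = ∑ j, x j • g (Finsupp.single j 1) := by
  conv_lhs => rw [← Finsupp.univ_sum_single x, map_sum]
  refine Finset.sum_congr rfl fun j _ ↦ ?_
  rw [← map_smul, Finsupp.smul_single, smul_eq_mul, mul_one]

namespace MinimalResolution

variable {k : Type u} [Field k] {R : Type u} [Ring R] [Algebra k R] {ε : R →ₐ[k] k}
  [Module R k] {n : ℕ}

/-- The minimal resolution as a projective resolution of `k`. -/
noncomputable abbrev toModuleResolution (F : MinimalResolution ε) : ModuleResolution R k where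
  X i := ModuleCat.of R (F.I i →₀ R)
  d := F.d
  aug := F.aug
  projective i := inferInstanceAs (Module.Projective R (F.I i →₀ R))
  aug_surjective := F.aug_surjective
  exact_aug := F.exact_aug
  exact := F.exact

section Minimality

lemma apply_d_eq_zero (hk : ∀ (r : R) (c : k), r • c = ε r * c) (F : MinimalResolution ε) {i : ℕ}
    (g : (F.I i →₀ R) →ₗ[R] k) (x : F.I (i + 1) →₀ R) : g (F.d i x) = 0 := by
  rw [← Finsupp.sum_single (F.d i x), map_finsuppSum]
  refine Finset.sum_eq_zero fun l _ ↦ ?_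
  change g (Finsupp.single l (F.d i x l)) = 0
  rw [← mul_one (F.d i x l), ← smul_eq_mul, ← Finsupp.smul_single, map_smul, hk, F.minimal,
    zero_mul]

lemma aug_apply_d_eq_zero (hk : ∀ (r : R) (c : k), r • c = ε r * c) (F : MinimalResolution ε)
    {i : ℕ} (g : (F.I i →₀ R) →ₗ[R] R) (x : F.I (i + 1) →₀ R) : ε (g (F.d i x)) = 0 :=
  F.apply_d_eq_zero hk (augLinearMap hk ∘ₗ g) x

lemma aug_apply_eq_zero_of_mem_coboundaries (hk : ∀ (r : R) (c : k), r • c = ε r * c)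
    (F : MinimalResolution ε) {i : ℕ} {f : (F.I i →₀ R) →ₗ[R] R}
    (hf : f ∈ F.toModuleResolution.coboundaries k R i) (x : F.I i →₀ R) : ε (f x) = 0 := by
  cases i with
  | zero =>
    obtain rfl : f = 0 := hf
    exact map_zero ε
  | succ i =>
    obtain ⟨g, rfl⟩ := hf
    exact F.aug_apply_d_eq_zero hk g x

lemma isEmpty_of_projDim_lt (hk : ∀ (r : R) (c : k), r • c = ε r * c) (F : MinimalResolution ε)
    {i : ℕ} (hi : (ModuleCat.of R k).projDim < i) : IsEmpty (F.I i) := by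
  refine ⟨fun l ↦ ?_⟩
  have := isScalarTower_of_aug hk
  let f : (F.I i →₀ R) →ₗ[R] k := augLinearMap hk ∘ₗ Finsupp.lapply l
  have f_single : f (Finsupp.single l 1) = 1 := by simp [f, augLinearMap]
  have f_mem : f ∈ F.toModuleResolution.coboundaries k k i :=
    (F.toModuleResolution.subsingleton_extGroup_iff i).1
      (subsingleton_extGroup_of_projDim_lt k (ModuleCat.of R k) hi)
      (LinearMap.ext fun x ↦ F.minimal i x l)
  cases i with
  | zero =>
    have f_eq : f = 0 := f_mem
    exact one_ne_zero (f_single.symm.trans (LinearMap.congr_fun f_eq _))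
  | succ i =>
    obtain ⟨g, hg⟩ := f_mem
    exact one_ne_zero (f_single.symm.trans
      ((LinearMap.congr_fun hg _).symm.trans (F.apply_d_eq_zero hk g _)))

lemma isEmpty_of_lt (hk : ∀ (r : R) (c : k), r • c = ε r * c) (F : MinimalResolution ε)
    (h : (ModuleCat.of R k).projDim ≤ n) {i : ℕ} (hi : n < i) : IsEmpty (F.I i) :=
  F.isEmpty_of_projDim_lt hk (h.trans_lt (Nat.cast_lt.2 hi))

lemma aug_single_ne_zero (F : MinimalResolution ε) (l : F.I 0) :
    F.aug (Finsupp.single l 1) ≠ 0 := fun h ↦ by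
  obtain ⟨y, hy⟩ := (F.exact_aug _).1 h
  have := F.minimal 0 y l
  rw [hy, Finsupp.single_eq_same, map_one] at this
  exact one_ne_zero this

lemma aug_single (hk : ∀ (r : R) (c : k), r • c = ε r * c) (F : MinimalResolution ε) (l : F.I 0)
    (r : R) : F.aug (Finsupp.single l r) = ε r * F.aug (Finsupp.single l 1) := by
  rw [← hk, ← map_smul, Finsupp.smul_single, smul_eq_mul, mul_one]

lemma subsingleton_index_zero (hk : ∀ (r : R) (c : k), r • c = ε r * c)
    (F : MinimalResolution ε) : Subsingleton (F.I 0) := by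
  refine ⟨fun l l' ↦ by_contra fun hne ↦ F.aug_single_ne_zero l' ?_⟩
  let a := F.aug (Finsupp.single l 1)
  let a' := F.aug (Finsupp.single l' 1)
  let x := Finsupp.single l (algebraMap k R a') - Finsupp.single l' (algebraMap k R a)
  have aug_x : F.aug x = 0 := by
    rw [map_sub, F.aug_single hk, F.aug_single hk l', AlgHom.commutes, AlgHom.commutes]
    exact sub_eq_zero.2 (mul_comm a' a)
  obtain ⟨y, hy⟩ := (F.exact_aug x).1 aug_x
  have := F.minimal 0 y l
  rw [hy] at this
  simpa [x, Finsupp.single_eq_of_ne hne] using this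

lemma nonempty_index_zero (F : MinimalResolution ε) : Nonempty (F.I 0) := by
  by_contra h
  rw [not_nonempty_iff] at h
  obtain ⟨x, hx⟩ := F.aug_surjective 1
  rw [Subsingleton.elim x 0, map_zero] at hx
  exact zero_ne_one hx

lemma mem_range_d_zero (hk : ∀ (r : R) (c : k), r • c = ε r * c) (F : MinimalResolution ε)
    (l : F.I 0) {x : F.I 0 →₀ R} (hx : ε (x l) = 0) : ∃ y, F.d 0 y = x := by
  have := F.subsingleton_index_zero hk
  refine (F.exact_aug x).1 ?_
  have x_eq : x = Finsupp.single l (x l) := by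
    ext l'
    rw [Subsingleton.elim l' l, Finsupp.single_eq_same]
  rw [x_eq, F.aug_single hk, hx, zero_mul]

end Minimality

section Gorenstein

lemma exists_coboundary_generator (hk : ∀ (r : R) (c : k), r • c = ε r * c)
    (F : MinimalResolution ε) (H : IsLeftGorenstein k R n) :
    ∃ f₀ ∉ F.toModuleResolution.coboundaries k R n, ∀ f : (F.I n →₀ R) →ₗ[R] R,
      ∃ c : k, f - c • f₀ ∈ F.toModuleResolution.coboundaries k R n := by
  have := F.isEmpty_of_lt hk H.projDim_le n.lt_succ_self
  obtain ⟨f₀, -, hf₀, h⟩ := (F.toModuleResolution.nonempty_extGroup_linearEquiv_field_iff n).1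
    H.nonempty_ext_linearEquiv
  refine ⟨f₀, hf₀, fun f ↦ h f ?_⟩
  exact Finsupp.lhom_ext' fun l ↦ isEmptyElim l

/-- The `n`-th term has rank one: modulo coboundaries, and hence also after applying `ε`, all the
coordinate functionals are multiples of a single functional. -/
lemma exists_top (hk : ∀ (r : R) (c : k), r • c = ε r * c)
    (F : MinimalResolution ε) (H : IsLeftGorenstein k R n) :
    ∃ l₀ : F.I n, (∀ l, l = l₀) ∧ ∀ f : (F.I n →₀ R) →ₗ[R] R, ε (f (Finsupp.single l₀ 1)) = 0 →
      f ∈ F.toModuleResolution.coboundaries k R n := by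
  obtain ⟨f₀, hf₀, exists_sub_mem⟩ := F.exists_coboundary_generator hk H
  have exists_aug_eq (f : (F.I n →₀ R) →ₗ[R] R) : ∃ c : k,
      f - c • f₀ ∈ F.toModuleResolution.coboundaries k R n ∧ ∀ x, ε (f x) = c * ε (f₀ x) := by
    obtain ⟨c, hc⟩ := exists_sub_mem f
    refine ⟨c, hc, fun x ↦ ?_⟩
    have := F.aug_apply_eq_zero_of_mem_coboundaries hk hc x
    rwa [LinearMap.sub_apply, LinearMap.smul_apply, map_sub, map_smul, smul_eq_mul,
      sub_eq_zero] at this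
  have aug_f₀_ne_zero (l) : ε (f₀ (Finsupp.single l 1)) ≠ 0 := fun h ↦ by
    obtain ⟨c, -, hc⟩ := exists_aug_eq (Finsupp.lapply l)
    simpa [h] using hc (Finsupp.single l 1)
  have nonempty : Nonempty (F.I n) := by
    by_contra h
    rw [not_nonempty_iff] at h
    refine hf₀ ?_
    rw [show f₀ = 0 from Finsupp.lhom_ext' fun l ↦ isEmptyElim l]
    exact zero_mem _
  obtain ⟨l₀⟩ := nonempty
  refine ⟨l₀, fun l ↦ by_contra fun hne ↦ ?_, fun f hf ↦ ?_⟩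
  · obtain ⟨c, -, hc⟩ := exists_aug_eq (Finsupp.lapply l)
    have c_eq_zero : c = 0 := by
      simpa [Finsupp.single_eq_of_ne hne, aug_f₀_ne_zero] using hc (Finsupp.single l₀ 1)
    simpa [c_eq_zero] using hc (Finsupp.single l 1)
  · obtain ⟨c, hmem, hc⟩ := exists_aug_eq f
    have c_eq_zero : c = 0 := by simpa [hf, aug_f₀_ne_zero] using hc (Finsupp.single l₀ 1)
    rwa [c_eq_zero, zero_smul, sub_zero] at hmem

/-- The coordinate functional of a basis element that occurs in no boundary is a cocycle, but by
minimality it is not a coboundary. -/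
lemma finite_of_finite_succ (hk : ∀ (r : R) (c : k), r • c = ε r * c) (F : MinimalResolution ε)
    {i : ℕ} (H : Subsingleton (extGroup k R (ModuleCat.of R k) (ModuleCat.of R R) i))
    [Finite (F.I (i + 1))] : Finite (F.I i) := by
  classical
  have := Fintype.ofFinite (F.I (i + 1))
  let S := Finset.univ.biUnion fun j : F.I (i + 1) ↦ (F.d i (Finsupp.single j 1)).support
  have mem_S (l : F.I i) : l ∈ S := by
    by_contra hl
    have cocycle : (Finsupp.lapply l : (F.I i →₀ R) →ₗ[R] R) ∈
        F.toModuleResolution.cocycles k R i := by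
      refine Finsupp.lhom_ext' fun j ↦ LinearMap.ext_ring ?_
      by_contra h
      exact hl (Finset.mem_biUnion.2 ⟨j, Finset.mem_univ _, Finsupp.mem_support_iff.2 h⟩)
    have := F.aug_apply_eq_zero_of_mem_coboundaries hk
      ((F.toModuleResolution.subsingleton_extGroup_iff i).1 H cocycle) (Finsupp.single l 1)
    simp at this
  exact .of_injective (fun l ↦ (⟨l, mem_S l⟩ : S)) fun _ _ h ↦ congrArg Subtype.val h

lemma finite_index (hk : ∀ (r : R) (c : k), r • c = ε r * c) (F : MinimalResolution ε)
    (H : IsLeftGorenstein k R n) (i : ℕ) : Finite (F.I i) := by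
  rcases lt_or_ge n i with hi | hi
  · have := F.isEmpty_of_lt hk H.projDim_le hi
    infer_instance
  · induction hi using Nat.decreasingInduction with
    | self =>
      obtain ⟨l₀, hl₀, -⟩ := F.exists_top hk H
      exact @Finite.of_subsingleton _ ⟨fun l l' ↦ (hl₀ l).trans (hl₀ l').symm⟩
    | of_succ i hi ih =>
      exact F.finite_of_finite_succ hk (H.subsingleton_ext i hi.ne)

lemma finite_sigma (hk : ∀ (r : R) (c : k), r • c = ε r * c) (F : MinimalResolution ε)
    (H : IsLeftGorenstein k R n) : Finite (Σ i, F.I i) := by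
  have := F.finite_index hk H
  have le (p : Σ i, F.I i) : p.1 < n + 1 := by
    by_contra h
    exact (F.isEmpty_of_lt hk H.projDim_le (by omega)).elim p.2
  refine .of_surjective (fun p : Σ i : Fin (n + 1), F.I i ↦ (⟨p.1, p.2⟩ : Σ i, F.I i)) ?_
  exact fun p ↦ ⟨⟨⟨p.1, le p⟩, p.2⟩, rfl⟩

end Gorenstein

section TotalMatrix

/-- The differentials of the resolution, collected into one matrix that acts on row vectors from the
right. -/
noncomputable def totalMatrix (F : MinimalResolution ε) :
    Matrix (Σ i, F.I i) (Σ i, F.I i) R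
  | ⟨0, _⟩ => 0
  | ⟨i + 1, j⟩ => (F.d i (Finsupp.single j 1)).mapDomain (Sigma.mk i)

lemma totalMatrix_apply (F : MinimalResolution ε) (i : ℕ) (j : F.I (i + 1)) (l : F.I i) :
    F.totalMatrix ⟨i + 1, j⟩ ⟨i, l⟩ = F.d i (Finsupp.single j 1) l :=
  Finsupp.mapDomain_apply sigma_mk_injective _ _

lemma totalMatrix_eq_zero (F : MinimalResolution ε) {p q : Σ i, F.I i} (h : p.1 ≠ q.1 + 1) :
    F.totalMatrix p q = 0 := by
  obtain ⟨_ | i, j⟩ := p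
  · rfl
  · refine Finsupp.mapDomain_of_notMem_range _ _ ?_
    rintro ⟨l, rfl⟩
    exact h rfl

lemma notMem_range_mk {F : MinimalResolution ε} {i : ℕ} {p : Σ i, F.I i}
    (h : p ∉ Set.range (Sigma.mk i)) : p.1 ≠ i := by
  rintro rfl
  exact h ⟨p.2, rfl⟩

variable (F : MinimalResolution ε)

/-- The functional on the degree `i` term with the degree `i` part of a column vector as
coefficients. -/
noncomputable def coefficientFunctional (v : (Σ i, F.I i) → R) (i : ℕ) : (F.I i →₀ R) →ₗ[R] R :=
  Finsupp.linearCombination R (v ∘ Sigma.mk i)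

lemma coefficientFunctional_single (v : (Σ i, F.I i) → R) {i : ℕ} (l : F.I i) :
    F.coefficientFunctional v i (Finsupp.single l 1) = v ⟨i, l⟩ := by
  rw [coefficientFunctional, Finsupp.linearCombination_single, one_smul, Function.comp_apply]

lemma ext_coefficientFunctional {v w : (Σ i, F.I i) → R}
    (h : ∀ i, F.coefficientFunctional v i = F.coefficientFunctional w i) : v = w :=
  funext fun ⟨i, l⟩ ↦ by
    rw [← F.coefficientFunctional_single v, h, coefficientFunctional_single]

lemma coefficientFunctional_zero (i : ℕ) :
    F.coefficientFunctional (0 : (Σ i, F.I i) → R) i = 0 :=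
  Finsupp.linearCombination_zero _ R R

lemma exists_coefficientFunctional_eq (g : ∀ i, (F.I i →₀ R) →ₗ[R] R) :
    ∃ v, ∀ i, F.coefficientFunctional v i = g i :=
  ⟨fun p ↦ g p.1 (Finsupp.single p.2 1), fun _ ↦ Finsupp.lhom_ext' fun l ↦ LinearMap.ext_ring
    (F.coefficientFunctional_single _ l)⟩

section Component

variable [Finite (Σ i, F.I i)]

/-- The degree `i` component of a row vector. -/
noncomputable def component (x : (Σ i, F.I i) → R) (i : ℕ) : F.I i →₀ R :=
  (Finsupp.equivFunOnFinite.symm x).split i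

lemma ext_component {x y : (Σ i, F.I i) → R} (h : ∀ i, F.component x i = F.component y i) :
    x = y :=
  funext fun p ↦ DFunLike.congr_fun (h p.1) p.2

lemma component_zero (i : ℕ) : F.component (0 : (Σ i, F.I i) → R) i = 0 :=
  Finsupp.ext fun _ ↦ rfl

lemma exists_component_eq (g : ∀ i, F.I i →₀ R) : ∃ x, ∀ i, F.component x i = g i :=
  ⟨fun p ↦ g p.1 p.2, fun _ ↦ Finsupp.ext fun _ ↦ rfl⟩

end Component

variable [Fintype (Σ i, F.I i)]

lemma coefficientFunctional_mulVec_zero (v : (Σ i, F.I i) → R) :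
    F.coefficientFunctional (Matrix.mulVec F.totalMatrix v) 0 = 0 :=
  Finsupp.lhom_ext' fun l ↦ LinearMap.ext_ring <|
    (F.coefficientFunctional_single _ l).trans (Finset.sum_eq_zero fun _ _ ↦ zero_mul _)

lemma component_vecMul (x : (Σ i, F.I i) → R) (i : ℕ) :
    F.component (Matrix.vecMul x F.totalMatrix) i = F.d i (F.component x (i + 1)) := by
  have := Finite.of_injective (Sigma.mk (β := F.I) (i + 1)) sigma_mk_injective
  cases nonempty_fintype (F.I (i + 1))
  ext l
  refine (congrFun (vecMul_comp_of_support sigma_mk_injective (Sigma.mk i)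
    (fun p hp _ ↦ F.totalMatrix_eq_zero (notMem_range_mk (i := i + 1) hp)) x) l).trans ?_
  refine Eq.trans ?_ (eq_sum_smul_single (Finsupp.lapply l ∘ₗ F.d i) _).symm
  exact Finset.sum_congr rfl fun j _ ↦ congrArg _ (F.totalMatrix_apply i j l)

lemma coefficientFunctional_mulVec_succ (v : (Σ i, F.I i) → R) (i : ℕ) :
    F.coefficientFunctional (Matrix.mulVec F.totalMatrix v) (i + 1) =
      F.coefficientFunctional v i ∘ₗ F.d i := by
  have := Finite.of_injective (Sigma.mk (β := F.I) i) sigma_mk_injective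
  cases nonempty_fintype (F.I i)
  refine Finsupp.lhom_ext' fun j ↦ LinearMap.ext_ring ?_
  refine (F.coefficientFunctional_single _ j).trans ?_
  refine (congrFun (mulVec_comp_of_support sigma_mk_injective (Sigma.mk (i + 1))
    (fun p hp l ↦ F.totalMatrix_eq_zero fun h ↦
      notMem_range_mk hp (Nat.succ_injective h).symm) v) j).trans ?_
  refine Eq.trans ?_ (eq_sum_smul_single (F.coefficientFunctional v i) _).symm
  exact Finset.sum_congr rfl fun l _ ↦
    congrArg₂ _ (F.totalMatrix_apply i j l) (F.coefficientFunctional_single v l).symm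

lemma coefficientFunctional_mulVec_mem_coboundaries (v : (Σ i, F.I i) → R) (i : ℕ) :
    F.coefficientFunctional (Matrix.mulVec F.totalMatrix v) i ∈
      F.toModuleResolution.coboundaries k R i := by
  cases i with
  | zero => exact F.coefficientFunctional_mulVec_zero v
  | succ i =>
    exact ModuleResolution.mem_coboundaries_succ.2
      ⟨_, (F.coefficientFunctional_mulVec_succ v i).symm⟩

lemma mulVec_mulVec_totalMatrix (v : (Σ i, F.I i) → R) :
    Matrix.mulVec F.totalMatrix (Matrix.mulVec F.totalMatrix v) = 0 := by
  refine F.ext_coefficientFunctional fun i ↦ ?_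
  rw [coefficientFunctional_zero]
  match i with
  | 0 => exact F.coefficientFunctional_mulVec_zero _
  | 1 => rw [coefficientFunctional_mulVec_succ, coefficientFunctional_mulVec_zero,
      LinearMap.zero_comp]
  | i + 2 =>
    rw [coefficientFunctional_mulVec_succ, coefficientFunctional_mulVec_succ,
      LinearMap.comp_assoc, (F.exact i).linearMap_comp_eq_zero, LinearMap.comp_zero]

lemma exists_mulVec_eq (v : (Σ i, F.I i) → R)
    (h : ∀ i, F.coefficientFunctional v i ∈ F.toModuleResolution.coboundaries k R i) :
    ∃ w, Matrix.mulVec F.totalMatrix w = v := by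
  choose g hg using fun i ↦ ModuleResolution.mem_coboundaries_succ.1 (h (i + 1))
  obtain ⟨w, hw⟩ := F.exists_coefficientFunctional_eq g
  refine ⟨w, F.ext_coefficientFunctional fun i ↦ ?_⟩
  cases i with
  | zero => exact (F.coefficientFunctional_mulVec_zero w).trans (h 0).symm
  | succ i => rw [coefficientFunctional_mulVec_succ, hw, hg]

lemma row_totalMatrix (hk : ∀ (r : R) (c : k), r • c = ε r * c) (bot : F.I 0) :
    IsHomologyFunctional ((Matrix.vecMulBilin k k).flip F.totalMatrix)
      (ε.toLinearMap ∘ₗ LinearMap.proj (⟨0, bot⟩ : Σ i, F.I i)) where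
  d_d x := F.ext_component fun i ↦ by
    change F.component (Matrix.vecMul (Matrix.vecMul x _) _) i = _
    rw [component_vecMul, component_vecMul, component_zero]
    exact (F.exact i).apply_apply_eq_zero _
  functional_d x := by
    change ε (F.component (Matrix.vecMul x _) 0 bot) = 0
    rw [component_vecMul, F.minimal]
  exists_cycle := by
    classical
    refine ⟨Pi.single ⟨0, bot⟩ 1, ?_, ?_⟩
    · change Matrix.vecMul (Pi.single (⟨0, bot⟩ : Σ i, F.I i) 1) _ = 0
      rw [Matrix.single_one_vecMul]
      rfl
    · exact (congrArg ε (Pi.single_eq_same _ _)).trans (map_one ε)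
  exact x hd hφ := by
    have mem_range : ∀ i, ∃ y, F.d i y = F.component x i
      | 0 => F.mem_range_d_zero hk bot hφ
      | i + 1 => (F.exact i _).1 <| by
        rw [← component_vecMul, show Matrix.vecMul x F.totalMatrix = 0 from hd, component_zero]
    choose g hg using mem_range
    obtain ⟨y, hy⟩ := F.exists_component_eq fun
      | 0 => 0
      | i + 1 => g i
    refine ⟨y, F.ext_component fun i ↦ ?_⟩
    change F.component (Matrix.vecMul y _) i = _
    rw [component_vecMul, hy, hg]

lemma col_totalMatrix (hk : ∀ (r : R) (c : k), r • c = ε r * c) (H : IsLeftGorenstein k R n)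
    {top : F.I n} (htop : ∀ f : (F.I n →₀ R) →ₗ[R] R, ε (f (Finsupp.single top 1)) = 0 →
      f ∈ F.toModuleResolution.coboundaries k R n) :
    IsHomologyFunctional (Matrix.mulVecBilin k k F.totalMatrix)
      (ε.toLinearMap ∘ₗ LinearMap.proj (⟨n, top⟩ : Σ i, F.I i)) where
  d_d v := F.mulVec_mulVec_totalMatrix v
  functional_d v := by
    change ε (Matrix.mulVec F.totalMatrix v ⟨n, top⟩) = 0
    rw [← F.coefficientFunctional_single (Matrix.mulVec F.totalMatrix v)]
    exact F.aug_apply_eq_zero_of_mem_coboundaries hk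
      (F.coefficientFunctional_mulVec_mem_coboundaries v n) _
  exists_cycle := by
    classical
    have := F.isEmpty_of_lt hk H.projDim_le n.lt_succ_self
    refine ⟨Pi.single ⟨n, top⟩ 1, ?_, ?_⟩
    · change Matrix.mulVec _ (Pi.single (⟨n, top⟩ : Σ i, F.I i) 1) = 0
      rw [Matrix.mulVec_single_one]
      ext ⟨i, l⟩
      refine F.totalMatrix_eq_zero ?_
      rintro rfl
      exact this.elim l
    · exact (congrArg ε (Pi.single_eq_same _ _)).trans (map_one ε)
  exact v hd hφ := by
    refine F.exists_mulVec_eq v fun i ↦ ?_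
    rcases eq_or_ne i n with rfl | hi
    · refine htop _ ?_
      rw [coefficientFunctional_single]
      exact hφ
    · refine (F.toModuleResolution.subsingleton_extGroup_iff i).1 (H.subsingleton_ext i hi) ?_
      rw [ModuleResolution.mem_cocycles, ← coefficientFunctional_mulVec_succ,
        show Matrix.mulVec F.totalMatrix v = 0 from hd, coefficientFunctional_zero]

end TotalMatrix

lemma nonempty_poincareDualResolution (hk : ∀ (r : R) (c : k), r • c = ε r * c)
    (F : MinimalResolution ε) (H : IsLeftGorenstein k R n) :
    Nonempty (PoincareDualResolution ε n) := by
  classical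
  have := F.finite_sigma hk H
  cases nonempty_fintype (Σ i, F.I i)
  obtain ⟨bot⟩ := F.nonempty_index_zero
  obtain ⟨top, -, htop⟩ := F.exists_top hk H
  exact ⟨{
    ι := Σ i, F.I i
    deg := Sigma.fst
    deg_le p := not_lt.1 fun h ↦ (F.isEmpty_of_lt hk H.projDim_le h).elim p.2
    D := F.totalMatrix
    deg_eq p q := not_imp_comm.1 F.totalMatrix_eq_zero
    bot := ⟨0, bot⟩
    top := ⟨n, top⟩
    deg_bot := rfl
    deg_top := rfl
    row := F.row_totalMatrix hk bot
    col := F.col_totalMatrix hk H htop }⟩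

end MinimalResolution

/-! ### Graded algebras and modules -/

/-- An `ℕ`-grading of a `k`-vector space, encoded by the projections onto its graded pieces. -/
structure NatGrading (k : Type*) [Field k] (V : Type*) [AddCommGroup V] [Module k V] where
  proj : ℕ → V →ₗ[k] V
  proj_proj : ∀ d e x, proj d (proj e x) = if d = e then proj e x else 0
  eventually_sum_proj : ∀ x, ∀ᶠ N in Filter.atTop, ∑ d ∈ Finset.range N, proj d x = x

namespace NatGrading

variable {k : Type*} [Field k] {U V W : Type*} [AddCommGroup U] [Module k U] [AddCommGroup V]
  [Module k V] [AddCommGroup W] [Module k W]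

/-- The space of homogeneous elements of degree `d`. -/
def piece (G : NatGrading k V) (d : ℕ) : Submodule k V := LinearMap.eqLocus (G.proj d) LinearMap.id

lemma mem_piece {G : NatGrading k V} {d : ℕ} {x : V} : x ∈ G.piece d ↔ G.proj d x = x := Iff.rfl

lemma proj_mem (G : NatGrading k V) (d : ℕ) (x : V) : G.proj d x ∈ G.piece d := by
  rw [mem_piece, G.proj_proj, if_pos rfl]

lemma proj_of_mem {G : NatGrading k V} {a : ℕ} {x : V} (hx : x ∈ G.piece a) (d : ℕ) :
    G.proj d x = if d = a then x else 0 := by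
  rw [← mem_piece.1 hx, G.proj_proj]

@[elab_as_elim]
lemma induction_on (G : NatGrading k V) {p : V → Prop} (x : V) (zero : p 0)
    (add : ∀ x y, p x → p y → p (x + y)) (mem : ∀ d, ∀ x ∈ G.piece d, p x) : p x := by
  obtain ⟨N, hN⟩ := (G.eventually_sum_proj x).exists
  rw [← hN]
  exact Finset.sum_induction _ p add zero fun d _ ↦ mem d _ (G.proj_mem d x)

lemma span_iUnion_piece (G : NatGrading k V) :
    Submodule.span k (⋃ d, (G.piece d : Set V)) = ⊤ :=
  Submodule.eq_top_iff'.2 fun x ↦ G.induction_on x (zero_mem _) (fun _ _ ↦ add_mem) fun d _ hx ↦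
    Submodule.subset_span (Set.mem_iUnion.2 ⟨d, hx⟩)

lemma map_proj_of_span {G : NatGrading k V} {H : NatGrading k W} {S : Set V}
    (hS : Submodule.span k S = ⊤) {f : V →ₗ[k] W}
    (hf : ∀ x ∈ S, ∃ a, x ∈ G.piece a ∧ f x ∈ H.piece a) (d : ℕ) (x : V) :
    f (G.proj d x) = H.proj d (f x) := by
  suffices f ∘ₗ G.proj d = H.proj d ∘ₗ f from LinearMap.congr_fun this x
  refine LinearMap.ext_on hS fun x hx ↦ ?_
  obtain ⟨a, hxa, hfa⟩ := hf x hx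
  rw [LinearMap.comp_apply, LinearMap.comp_apply, proj_of_mem hxa, proj_of_mem hfa, apply_ite f,
    map_zero]

lemma apply_mem_piece_of_span {G : NatGrading k U} {H : NatGrading k V} {L : NatGrading k W}
    {S : Set U} (hS : Submodule.span k S = ⊤) {T : Set V} (hT : Submodule.span k T = ⊤)
    {f : U →ₗ[k] V →ₗ[k] W}
    (hf : ∀ x ∈ S, ∀ y ∈ T, ∃ a b, x ∈ G.piece a ∧ y ∈ H.piece b ∧ f x y ∈ L.piece (a + b))
    {a b : ℕ} {x : U} (hx : x ∈ G.piece a) {y : V} (hy : y ∈ H.piece b) :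
    f x y ∈ L.piece (a + b) := by
  have hxy := Submodule.apply_mem_map₂ (f.compl₁₂ (G.proj a) (H.proj b))
    (hS ▸ Submodule.mem_top : x ∈ Submodule.span k S)
    (hT ▸ Submodule.mem_top : y ∈ Submodule.span k T)
  rw [Submodule.map₂_span_span, LinearMap.compl₁₂_apply, mem_piece.1 hx, mem_piece.1 hy] at hxy
  refine Submodule.span_le.2 ?_ hxy
  rintro _ ⟨s, hs, t, ht, rfl⟩
  obtain ⟨a', b', hsa, htb, hst⟩ := hf s hs t ht
  change f (G.proj a s) (H.proj b t) ∈ L.piece (a + b)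
  rw [proj_of_mem hsa, proj_of_mem htb]
  split_ifs with ha hb
  · rwa [ha, hb]
  · simp only [map_zero, zero_mem]
  · simp only [map_zero, LinearMap.zero_apply, zero_mem]
  · simp only [map_zero, zero_mem]

/-- The grading with given projections, which need only be known on a spanning set of homogeneous
elements. -/
def ofSpan (proj : ℕ → V →ₗ[k] V) {S : Set V} (hS : Submodule.span k S = ⊤)
    (homogeneous : ∀ x ∈ S, ∃ a, ∀ d, proj d x = if d = a then x else 0) : NatGrading k V where
  proj := proj
  proj_proj d e x := by
    suffices proj d ∘ₗ proj e = if d = e then proj e else 0 by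
      rw [← LinearMap.comp_apply, this]
      split_ifs <;> rfl
    refine LinearMap.ext_on hS fun x hx ↦ ?_
    obtain ⟨a, ha⟩ := homogeneous x hx
    rw [LinearMap.comp_apply, ha e]
    split_ifs with h₁ h₂ h₂
    · rw [h₂, ha e]
    · rw [ha d, if_neg (h₁ ▸ h₂), LinearMap.zero_apply]
    · rw [map_zero, ha e, if_neg h₁]
    · rw [map_zero, LinearMap.zero_apply]
  eventually_sum_proj x := by
    have hx : x ∈ Submodule.span k S := hS ▸ Submodule.mem_top
    induction hx using Submodule.span_induction with
    | zero => simp only [map_zero, Finset.sum_const_zero, Filter.eventually_true]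
    | add x y _ _ hx hy =>
      filter_upwards [hx, hy] with N hNx hNy
      simp only [map_add, Finset.sum_add_distrib, hNx, hNy]
    | smul c x _ hx =>
      filter_upwards [hx] with N hN
      simp only [map_smul, ← Finset.smul_sum, hN]
    | mem x hx =>
      obtain ⟨a, ha⟩ := homogeneous x hx
      filter_upwards [Filter.eventually_gt_atTop a] with N hN
      simp only [ha, Finset.sum_ite_eq', Finset.mem_range, if_pos hN]

/-- The transport of a grading along a linear equivalence. -/
def congr (G : NatGrading k V) (e : V ≃ₗ[k] W) : NatGrading k W where
  proj d := e.conj (G.proj d)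
  proj_proj d e' x := by
    simp only [LinearEquiv.conj_apply_apply, LinearEquiv.symm_apply_apply, G.proj_proj]
    rw [apply_ite e, map_zero]
  eventually_sum_proj x := by
    filter_upwards [G.eventually_sum_proj (e.symm x)] with N hN
    simp only [LinearEquiv.conj_apply_apply, ← map_sum, hN, LinearEquiv.apply_symm_apply]

lemma mem_piece_congr {G : NatGrading k V} {e : V ≃ₗ[k] W} {d : ℕ} {x : W} :
    x ∈ (G.congr e).piece d ↔ e.symm x ∈ G.piece d := by
  rw [mem_piece, mem_piece, ← e.symm.injective.eq_iff]
  simp only [congr, LinearEquiv.conj_apply_apply, LinearEquiv.symm_apply_apply]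

section Tensor

open Finset.HasAntidiagonal

/-- The pure tensors of homogeneous elements. -/
def homogeneousTensors (G : NatGrading k V) (H : NatGrading k W) : Set (V ⊗[k] W) :=
  {z | ∃ a, ∃ x ∈ G.piece a, ∃ b, ∃ y ∈ H.piece b, x ⊗ₜ y = z}

lemma span_homogeneousTensors (G : NatGrading k V) (H : NatGrading k W) :
    Submodule.span k (G.homogeneousTensors H) = ⊤ := by
  rw [eq_top_iff, ← TensorProduct.map₂_mk_top_top_eq_top, ← G.span_iUnion_piece,
    ← H.span_iUnion_piece, Submodule.map₂_span_span]
  refine Submodule.span_mono ?_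
  rintro _ ⟨x, hx, y, hy, rfl⟩
  obtain ⟨a, ha⟩ := Set.mem_iUnion.1 hx
  obtain ⟨b, hb⟩ := Set.mem_iUnion.1 hy
  exact ⟨a, x, ha, b, y, hb, rfl⟩

lemma sum_map_proj_tmul {G : NatGrading k V} {H : NatGrading k W} {a b : ℕ} {x : V}
    (hx : x ∈ G.piece a) {y : W} (hy : y ∈ H.piece b) (d : ℕ) :
    (∑ p ∈ antidiagonal d, TensorProduct.map (G.proj p.1) (H.proj p.2)) (x ⊗ₜ y) =
      if d = a + b then x ⊗ₜ[k] y else 0 := by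
  have term (p : ℕ × ℕ) : TensorProduct.map (G.proj p.1) (H.proj p.2) (x ⊗ₜ y) =
      if p = (a, b) then x ⊗ₜ[k] y else 0 := by
    rw [TensorProduct.map_tmul, proj_of_mem hx, proj_of_mem hy]
    split_ifs <;> simp_all [Prod.ext_iff]
  simp only [LinearMap.sum_apply, term, Finset.sum_ite_eq', mem_antidiagonal,
    eq_comm (b := d)]

/-- The total grading of a tensor product. -/
noncomputable def tensor (G : NatGrading k V) (H : NatGrading k W) : NatGrading k (V ⊗[k] W) :=
  ofSpan (fun d ↦ ∑ p ∈ antidiagonal d, TensorProduct.map (G.proj p.1) (H.proj p.2))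
    (G.span_homogeneousTensors H) <| by
      rintro _ ⟨a, x, hx, b, y, hy, rfl⟩
      exact ⟨a + b, sum_map_proj_tmul hx hy⟩

lemma tmul_mem_piece {G : NatGrading k V} {H : NatGrading k W} {a b : ℕ} {x : V}
    (hx : x ∈ G.piece a) {y : W} (hy : y ∈ H.piece b) : x ⊗ₜ y ∈ (G.tensor H).piece (a + b) :=
  (sum_map_proj_tmul hx hy (a + b)).trans (if_pos rfl)

end Tensor

section Finsupp

variable {J : Type*}

/-- The functions with a single nonzero value, which is homogeneous. -/
def homogeneousSingles (G : NatGrading k V) (J : Type*) : Set (J →₀ V) :=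
  {f | ∃ j a, ∃ x ∈ G.piece a, Finsupp.single j x = f}

lemma span_homogeneousSingles (G : NatGrading k V) (J : Type*) :
    Submodule.span k (G.homogeneousSingles J) = ⊤ := by
  refine Submodule.eq_top_iff'.2 fun f ↦ ?_
  induction f using Finsupp.induction_linear with
  | zero => exact zero_mem _
  | add f g hf hg => exact add_mem hf hg
  | single j x =>
    induction x using G.induction_on with
    | zero => simp only [Finsupp.single_zero, zero_mem]
    | add x y hx hy => simpa only [Finsupp.single_add] using add_mem hx hy
    | mem d x hx => exact Submodule.subset_span ⟨j, d, x, hx, rfl⟩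

/-- The component of degree `d` of a finitely supported function, whose `j`-th coordinate is
shifted by `deg j`. -/
noncomputable def finsuppProj (G : NatGrading k V) (deg : J → ℕ) (d : ℕ) :
    (J →₀ V) →ₗ[k] (J →₀ V) :=
  Finsupp.lsum k fun j ↦ if deg j ≤ d then Finsupp.lsingle j ∘ₗ G.proj (d - deg j) else 0

lemma finsuppProj_single {G : NatGrading k V} (deg : J → ℕ) {a : ℕ} {x : V}
    (hx : x ∈ G.piece a) (j : J) (d : ℕ) :
    G.finsuppProj deg d (Finsupp.single j x) =
      if d = a + deg j then Finsupp.single j x else 0 := by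
  rw [finsuppProj, Finsupp.lsum_single]
  split_ifs with hle hd hd
  · rw [LinearMap.comp_apply, proj_of_mem hx, if_pos (by omega), Finsupp.lsingle_apply]
  · rw [LinearMap.comp_apply, proj_of_mem hx, if_neg (by omega), map_zero]
  · omega
  · rfl

/-- The grading of a free module whose `j`-th basis vector has degree `deg j`. -/
noncomputable def finsupp (G : NatGrading k V) (deg : J → ℕ) : NatGrading k (J →₀ V) :=
  ofSpan (G.finsuppProj deg) (G.span_homogeneousSingles J) <| by
    rintro _ ⟨j, a, x, hx, rfl⟩
    exact ⟨a + deg j, finsuppProj_single deg hx j⟩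

lemma single_mem_piece {G : NatGrading k V} (deg : J → ℕ) {a : ℕ} {x : V} (hx : x ∈ G.piece a)
    (j : J) : Finsupp.single j x ∈ (G.finsupp deg).piece (a + deg j) :=
  (finsuppProj_single deg hx j _).trans (if_pos rfl)

end Finsupp

/-- The grading of a subspace that contains the homogeneous components of its elements. -/
def restrict (G : NatGrading k V) (N : Submodule k V) (hN : ∀ d, ∀ x ∈ N, G.proj d x ∈ N) :
    NatGrading k N where
  proj d := (G.proj d).restrict (hN d)
  proj_proj d e x := Subtype.ext <| by
    simp only [LinearMap.coe_restrict_apply, G.proj_proj]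
    split_ifs <;> rfl
  eventually_sum_proj x := by
    filter_upwards [G.eventually_sum_proj x] with N hN
    exact Subtype.ext <| by
      simpa only [AddSubmonoidClass.coe_finsetSum, LinearMap.coe_restrict_apply] using hN

lemma mem_piece_restrict {G : NatGrading k V} {N : Submodule k V}
    {hN : ∀ d, ∀ x ∈ N, G.proj d x ∈ N} {d : ℕ} {x : N} :
    x ∈ (G.restrict N hN).piece d ↔ (x : V) ∈ G.piece d :=
  Subtype.ext_iff

end NatGrading

/-- A connected grading of the algebra `A`: its piece of degree `0` is `k`, and its augmentation
is `ε`. -/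
structure ConnectedGrading {k A : Type*} [Field k] [Ring A] [Algebra k A] (ε : A →ₐ[k] k) extends
    NatGrading k A where
  mul_mem : ∀ {a b x y}, x ∈ toNatGrading.piece a → y ∈ toNatGrading.piece b →
    x * y ∈ toNatGrading.piece (a + b)
  proj_zero : ∀ x, proj 0 x = algebraMap k A (ε x)

namespace ConnectedGrading

variable {k A B : Type u} [Field k] [Ring A] [Algebra k A] [Ring B] [Algebra k B] {ε : A →ₐ[k] k}
  {ε' : B →ₐ[k] k}

lemma aug_of_mem_piece (G : ConnectedGrading ε) {d : ℕ} (hd : 0 < d) {x : A}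
    (hx : x ∈ G.piece d) : ε x = 0 := by
  have := ε.toRingHom.domain_nontrivial
  rw [← map_eq_zero_iff (algebraMap k A) (algebraMap k A).injective, ← G.proj_zero,
    NatGrading.proj_of_mem hx, if_neg hd.ne]

/-- The same grading on the opposite algebra. -/
def op (G : ConnectedGrading ε) : ConnectedGrading (mopAug ε) where
  toNatGrading := G.congr (MulOpposite.opLinearEquiv k)
  mul_mem {a b x y} hx hy := by
    rw [NatGrading.mem_piece_congr] at hx hy ⊢
    rw [add_comm]
    exact G.mul_mem hy hx
  proj_zero x := congrArg MulOpposite.op (G.proj_zero x.unop)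

/-- The total grading of the tensor product of two algebras. -/
noncomputable def tensor (G : ConnectedGrading ε) (H : ConnectedGrading ε') :
    ConnectedGrading (Algebra.TensorProduct.productMap ε ε') where
  toNatGrading := G.toNatGrading.tensor H.toNatGrading
  mul_mem hz hw := by
    refine NatGrading.apply_mem_piece_of_span (f := LinearMap.mul k (A ⊗[k] B))
      (G.span_homogeneousTensors H.toNatGrading) (G.span_homogeneousTensors H.toNatGrading) ?_ hz hw
    rintro _ ⟨a, x, hx, b, y, hy, rfl⟩ _ ⟨a', x', hx', b', y', hy', rfl⟩
    refine ⟨a + b, a' + b', NatGrading.tmul_mem_piece hx hy, NatGrading.tmul_mem_piece hx' hy', ?_⟩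
    rw [LinearMap.mul_apply', Algebra.TensorProduct.tmul_mul_tmul, add_add_add_comm]
    exact NatGrading.tmul_mem_piece (G.mul_mem hx hx') (H.mul_mem hy hy')
  proj_zero z := by
    induction z with
    | zero => simp only [map_zero]
    | add z w hz hw => simp only [map_add, hz, hw]
    | tmul x y =>
      change (∑ p ∈ Finset.HasAntidiagonal.antidiagonal 0,
        TensorProduct.map (G.proj p.1) (H.proj p.2)) (x ⊗ₜ y) = _
      simp only [Finset.HasAntidiagonal.antidiagonal_zero, Finset.sum_singleton,
        TensorProduct.map_tmul, G.proj_zero, H.proj_zero,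
        Algebra.TensorProduct.productMap_apply_tmul,
        Algebra.algebraMap_eq_smul_one, TensorProduct.smul_tmul_smul,
        Algebra.TensorProduct.one_def]

section GradedAlgebra

variable (𝒜 : ℕ → Submodule k A) [GradedAlgebra 𝒜]

/-- The projections of a `GradedAlgebra`, forgetting the multiplication. -/
noncomputable def natGradingOfGradedAlgebra : NatGrading k A :=
  .ofSpan (S := ⋃ i, (𝒜 i : Set A)) (GradedAlgebra.proj 𝒜)
    (by rw [← Submodule.iSup_eq_span, (DirectSum.Decomposition.isInternal 𝒜).submodule_iSup_eq_top])
    fun x hx ↦ by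
      obtain ⟨a, ha⟩ := Set.mem_iUnion.1 hx
      refine ⟨a, fun d ↦ ?_⟩
      split_ifs with hd
      · exact hd ▸ DirectSum.decompose_of_mem_same 𝒜 ha
      · exact DirectSum.decompose_of_mem_ne 𝒜 ha (Ne.symm hd)

lemma mem_piece_natGradingOfGradedAlgebra {d : ℕ} {x : A} :
    x ∈ (natGradingOfGradedAlgebra 𝒜).piece d ↔ x ∈ 𝒜 d :=
  ⟨fun hx ↦ NatGrading.mem_piece.1 hx ▸ SetLike.coe_mem (DirectSum.decompose 𝒜 x d),
    fun hx ↦ DirectSum.decompose_of_mem_same 𝒜 hx⟩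

/-- A `GradedAlgebra` with degree-`0` part `k`, whose augmentation ideal is spanned by the elements
of positive degree. -/
noncomputable def ofGradedAlgebra (h𝒜 : 𝒜 0 = 1)
    (hε : RingHom.ker ε.toRingHom = Ideal.span {x | ∃ i, 0 < i ∧ x ∈ 𝒜 i}) :
    ConnectedGrading ε where
  toNatGrading := natGradingOfGradedAlgebra 𝒜
  mul_mem hx hy := by
    rw [mem_piece_natGradingOfGradedAlgebra] at hx hy ⊢
    exact SetLike.mul_mem_graded hx hy
  proj_zero x := by
    induction x using (natGradingOfGradedAlgebra 𝒜).induction_on with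
    | zero => simp only [map_zero]
    | add x y hx hy => simp only [map_add, hx, hy]
    | mem d x hx =>
      rw [NatGrading.proj_of_mem hx]
      rw [mem_piece_natGradingOfGradedAlgebra] at hx
      split_ifs with hd
      · obtain ⟨c, rfl⟩ := Submodule.mem_one.1 (h𝒜 ▸ hd ▸ hx)
        rw [AlgHom.commutes, Algebra.algebraMap_self_apply]
      · have : x ∈ RingHom.ker ε.toRingHom :=
          hε ▸ Ideal.subset_span ⟨d, Nat.pos_of_ne_zero (Ne.symm hd), hx⟩
        rw [show ε x = 0 from this, map_zero]

end GradedAlgebra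

end ConnectedGrading

/-- A grading of the `Λ`-module `K` that is compatible with a grading of the algebra `Λ`. -/
structure ModuleGrading {k Λ : Type*} [Field k] [Ring Λ] [Algebra k Λ] (G : NatGrading k Λ)
    (K : Type*) [AddCommGroup K] [Module k K] [Module Λ K] extends NatGrading k K where
  smul_mem : ∀ {a b r x}, r ∈ G.piece a → x ∈ toNatGrading.piece b →
    r • x ∈ toNatGrading.piece (a + b)

namespace ModuleGrading

variable {k Λ : Type u} [Field k] [Ring Λ] [Algebra k Λ] {ε : Λ →ₐ[k] k} {J K : Type u}
  [AddCommGroup K] [Module k K] [Module Λ K]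

/-- The free module on `J`, with its `j`-th basis vector in degree `deg j`. -/
noncomputable def free (G : ConnectedGrading ε) (deg : J → ℕ) :
    ModuleGrading G.toNatGrading (J →₀ Λ) where
  toNatGrading := G.finsupp deg
  smul_mem hr hx := by
    refine NatGrading.apply_mem_piece_of_span (f := (Algebra.lsmul k k (J →₀ Λ)).toLinearMap)
      G.span_iUnion_piece (G.span_homogeneousSingles J) ?_ hr hx
    rintro r hr _ ⟨j, b, x, hx, rfl⟩
    obtain ⟨a, ha⟩ := Set.mem_iUnion.1 hr
    refine ⟨a, b + deg j, ha, NatGrading.single_mem_piece deg hx j, ?_⟩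
    change r • Finsupp.single j x ∈ _
    rw [Finsupp.smul_single, ← add_assoc]
    exact NatGrading.single_mem_piece deg (G.mul_mem ha hx) j

lemma linearCombination_proj [IsScalarTower k Λ K] {G : ConnectedGrading ε}
    (H : ModuleGrading G.toNatGrading K) {e : J → K} {deg : J → ℕ}
    (he : ∀ j, e j ∈ H.piece (deg j)) (d : ℕ) (f : J →₀ Λ) :
    Finsupp.linearCombination Λ e ((free G deg).proj d f) =
      H.proj d (Finsupp.linearCombination Λ e f) := by
  refine NatGrading.map_proj_of_span (f := (Finsupp.linearCombination Λ e).restrictScalars k)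
    (G.span_homogeneousSingles J) ?_ d f
  rintro _ ⟨j, a, r, hr, rfl⟩
  refine ⟨a + deg j, NatGrading.single_mem_piece deg hr j, ?_⟩
  rw [LinearMap.restrictScalars_apply, Finsupp.linearCombination_single]
  exact H.smul_mem hr (he j)

/-- The induced grading on the kernel of a linear map that preserves degrees. -/
def ker [IsScalarTower k Λ K] {L : Type u} [AddCommGroup L] [Module k L] [Module Λ L]
    [IsScalarTower k Λ L] {G : NatGrading k Λ} (H : ModuleGrading G K) (f : K →ₗ[Λ] L)
    (H' : NatGrading k L) (hf : ∀ d x, f (H.proj d x) = H'.proj d (f x)) :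
    ModuleGrading G (LinearMap.ker f) where
  toNatGrading := H.restrict ((LinearMap.ker f).restrictScalars k) fun d x hx ↦ by
    rw [Submodule.restrictScalars_mem, LinearMap.mem_ker] at hx ⊢
    rw [hf, hx, map_zero]
  smul_mem hr hx :=
    NatGrading.mem_piece_restrict.2 (H.smul_mem hr (NatGrading.mem_piece_restrict.1 hx))

section MinimalGenerators

/-- The subspace `Λ₊ K` of the module `K`, where `Λ₊` is the augmentation ideal. -/
def augSubspace (ε : Λ →ₐ[k] k) (K : Type u) [AddCommGroup K] [Module k K] [Module Λ K] :
    Submodule k K :=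
  Submodule.span k {x | ∃ r : Λ, ε r = 0 ∧ ∃ y : K, r • y = x}

lemma exists_homogeneous_basis_mod_augSubspace {G : NatGrading k Λ} (H : ModuleGrading G K)
    (ε : Λ →ₐ[k] k) :
    ∃ (J : Type u) (e : J → K) (deg : J → ℕ), (∀ j, e j ∈ H.piece (deg j)) ∧
      LinearIndependent k ((augSubspace ε K).mkQ ∘ e) ∧
      Submodule.span k (Set.range e) ⊔ augSubspace ε K = ⊤ := by
  obtain ⟨b, hb, hspan, hli⟩ := exists_linearIndependent k
    ((augSubspace ε K).mkQ '' ⋃ d, (H.piece d : Set K))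
  choose e he hmk using fun v : b ↦ hb v.2
  choose deg hdeg using fun v ↦ Set.mem_iUnion.1 (he v)
  have mk_comp_e : (augSubspace ε K).mkQ ∘ e = Subtype.val := funext hmk
  refine ⟨b, e, deg, hdeg, mk_comp_e ▸ hli, ?_⟩
  rw [← Submodule.map_span, H.span_iUnion_piece, Submodule.map_top, Submodule.range_mkQ] at hspan
  rw [sup_comm, ← Submodule.map_mkQ_eq_top, Submodule.map_span, ← Set.range_comp, mk_comp_e,
    Subtype.range_coe, hspan]

variable [IsScalarTower k Λ K]

lemma sub_aug_smul_mem (r : Λ) (x : K) : r • x - ε r • x ∈ augSubspace ε K := by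
  refine Submodule.subset_span ⟨r - algebraMap k Λ (ε r), ?_, x, ?_⟩
  · rw [map_sub, AlgHom.commutes, Algebra.algebraMap_self_apply, sub_self]
  · rw [sub_smul, algebraMap_smul]

lemma proj_smul_mem_of_aug_eq_zero {G : ConnectedGrading ε} (H : ModuleGrading G.toNatGrading K)
    {d : ℕ} {L : Submodule Λ K} (hL : ∀ b < d, ∀ x ∈ H.piece b, x ∈ L) {r : Λ} (hr : ε r = 0)
    (x : K) : H.proj d (r • x) ∈ L := by
  suffices H.proj d (r • x - ε r • x) ∈ L by rwa [hr, zero_smul, sub_zero] at this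
  clear hr
  induction x using H.induction_on with
  | zero => simp only [smul_zero, sub_self, map_zero, zero_mem]
  | add x y hx hy =>
    rw [smul_add, smul_add, add_sub_add_comm, map_add]
    exact add_mem hx hy
  | mem b x hx =>
    induction r using G.induction_on with
    | zero => simp only [map_zero, zero_smul, sub_self, zero_mem]
    | add r s hr hs =>
      rw [map_add, add_smul, add_smul, add_sub_add_comm, map_add]
      exact add_mem hr hs
    | mem a r hr =>
      rcases a.eq_zero_or_pos with rfl | ha
      · have : r = algebraMap k Λ (ε r) := by rw [← G.proj_zero, NatGrading.mem_piece.1 hr]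
        rw [this, AlgHom.commutes, Algebra.algebraMap_self_apply, algebraMap_smul, sub_self,
          map_zero]
        exact zero_mem L
      · rw [G.aug_of_mem_piece ha hr, zero_smul, sub_zero,
          NatGrading.proj_of_mem (H.smul_mem hr hx)]
        split_ifs with hd
        · exact L.smul_mem r (hL b (by omega) x hx)
        · exact zero_mem _

/-- A form of the graded Nakayama lemma. -/
lemma span_eq_top_of_sup_augSubspace_eq_top {G : ConnectedGrading ε}
    (H : ModuleGrading G.toNatGrading K) {e : J → K} {deg : J → ℕ}
    (he : ∀ j, e j ∈ H.piece (deg j))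
    (htop : Submodule.span k (Set.range e) ⊔ augSubspace ε K = ⊤) :
    Submodule.span Λ (Set.range e) = ⊤ := by
  set L := Submodule.span Λ (Set.range e)
  have proj_mem (d : ℕ) : Submodule.span k (Set.range e) ≤
      (L.restrictScalars k).comap (H.proj d) := by
    refine Submodule.span_le.2 ?_
    rintro _ ⟨j, rfl⟩
    change H.proj d (e j) ∈ L
    rw [NatGrading.proj_of_mem (he j)]
    split_ifs
    · exact Submodule.subset_span ⟨j, rfl⟩
    · exact zero_mem L
  have piece_le (d : ℕ) : ∀ x ∈ H.piece d, x ∈ L := by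
    induction d using Nat.strong_induction_on with
    | _ d ih =>
      intro x hx
      obtain ⟨y, hy, z, hz, rfl⟩ := Submodule.mem_sup.1 (htop ▸ Submodule.mem_top : x ∈ _)
      rw [← NatGrading.mem_piece.1 hx, map_add]
      refine add_mem (proj_mem d hy) ?_
      suffices augSubspace ε K ≤ (L.restrictScalars k).comap (H.proj d) from this hz
      refine Submodule.span_le.2 ?_
      rintro _ ⟨r, hr, y, rfl⟩
      exact H.proj_smul_mem_of_aug_eq_zero ih hr y
  exact Submodule.eq_top_iff'.2 fun x ↦
    H.induction_on x (zero_mem _) (fun _ _ ↦ add_mem) piece_le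

lemma aug_eq_zero_of_linearCombination_eq_zero {e : J → K}
    (he : LinearIndependent k ((augSubspace ε K).mkQ ∘ e)) {f : J →₀ Λ}
    (hf : Finsupp.linearCombination Λ e f = 0) (j : J) : ε (f j) = 0 := by
  let c : J →₀ k := f.mapRange ε (map_zero ε)
  have : Finsupp.linearCombination Λ e f - Finsupp.linearCombination k e c ∈ augSubspace ε K := by
    rw [Finsupp.linearCombination_apply, Finsupp.linearCombination_apply,
      Finsupp.sum_mapRange_index fun j ↦ zero_smul k (e j), ← Finsupp.sum_sub]
    exact sum_mem fun j _ ↦ sub_aug_smul_mem (f j) (e j)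
  have hc : Finsupp.linearCombination k ((augSubspace ε K).mkQ ∘ e) c = 0 := by
    rw [hf, zero_sub, neg_mem_iff, ← Submodule.Quotient.mk_eq_zero] at this
    rw [← this, ← Submodule.mkQ_apply, LinearMap.map_finsupp_linearCombination]
  exact DFunLike.congr_fun ((linearIndependent_iff.1 he) c hc) j

end MinimalGenerators

end ModuleGrading

/-! ### Minimal bimodule resolutions -/

section ProjectiveAlong

variable {k Λ B : Type u} [Field k] [Ring Λ] [Algebra k Λ] [Ring B] [Algebra k B]
  {K L : Type u} [AddCommGroup K] [Module k K] [Module Λ K] [AddCommGroup L] [Module k L]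
  [Module Λ L]

/-- A linear map of `Λ`-modules that is `B`-linear after restriction of scalars along `ι`. -/
def IsLinearAlong {K L : Type*} [AddCommMonoid K] [Module k K] [Module Λ K] [AddCommMonoid L]
    [Module k L] [Module Λ L] (ι : B →ₐ[k] Λ) (f : K →ₗ[k] L) : Prop :=
  ∀ b x, f (ι b • x) = ι b • f x

/-- The `Λ`-module `K` is projective after restriction of scalars along `ι`. -/
def IsProjectiveAlong (ι : B →ₐ[k] Λ) (K : Type u) [AddCommGroup K] [Module Λ K] : Prop :=
  letI := Module.compHom K ι.toRingHom
  Module.Projective B K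

lemma IsProjectiveAlong.exists_section [IsScalarTower k Λ K] [IsScalarTower k Λ L]
    {ι : B →ₐ[k] Λ} (hK : IsProjectiveAlong ι K) (f : L →ₗ[Λ] K) (hf : Function.Surjective f) :
    ∃ s : K →ₗ[k] L, IsLinearAlong ι s ∧ ∀ x, f (s x) = x := by
  let := Module.compHom K ι.toRingHom
  let := Module.compHom L ι.toRingHom
  have : Module.Projective B K := hK
  let fB : L →ₗ[B] K := { f with map_smul' := fun b ↦ f.map_smul (ι b) }
  obtain ⟨s, hs⟩ := Module.projective_lifting_property fB LinearMap.id hf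
  refine ⟨{ s with map_smul' := fun c x ↦ ?_ }, s.map_smul, LinearMap.congr_fun hs⟩
  have smul_eq (M : Type u) [AddCommGroup M] [Module k M] [Module Λ M] [IsScalarTower k Λ M]
      (x : M) : c • x = ι (algebraMap k B c) • x := by
    rw [AlgHom.commutes, algebraMap_smul]
  change s (c • x) = c • s x
  rw [smul_eq, smul_eq]
  exact s.map_smul _ x

lemma IsProjectiveAlong.ker {ι : B →ₐ[k] Λ} (hL : IsProjectiveAlong ι L) {f : L →ₗ[Λ] K}
    {s : K →ₗ[k] L} (hs : IsLinearAlong ι s) (hfs : ∀ x, f (s x) = x) :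
    IsProjectiveAlong ι (LinearMap.ker f) := by
  let := Module.compHom L ι.toRingHom
  let := Module.compHom (LinearMap.ker f) ι.toRingHom
  have : Module.Projective B L := hL
  let incl : LinearMap.ker f →ₗ[B] L :=
    { (LinearMap.ker f).subtype with map_smul' := fun _ _ ↦ rfl }
  let retr : L →ₗ[B] LinearMap.ker f :=
    { toFun := fun x ↦ ⟨x - s (f x), by rw [LinearMap.mem_ker, map_sub, hfs, sub_self]⟩
      map_add' := fun x y ↦ Subtype.ext <| by
        simp only [map_add, add_sub_add_comm, Submodule.coe_add]
      map_smul' := fun b x ↦ Subtype.ext <| by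
        change ι b • x - s (f (ι b • x)) = ι b • (x - s (f x))
        rw [map_smul, hs, smul_sub] }
  refine Module.Projective.of_split incl retr (LinearMap.ext fun x ↦ Subtype.ext ?_)
  change (x : L) - s (f x) = x
  rw [LinearMap.mem_ker.1 x.2, map_zero, sub_zero]

lemma IsProjectiveAlong.finsupp {ι : B →ₐ[k] Λ} (hΛ : IsProjectiveAlong ι Λ) (J : Type u) :
    IsProjectiveAlong ι (J →₀ Λ) := by
  let := Module.compHom Λ ι.toRingHom
  have : Module.Projective B Λ := hΛ
  classical
  exact Module.Projective.of_equiv (finsuppLequivDFinsupp (ι := J) (M := Λ) B).symm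

end ProjectiveAlong

/-- A minimal free resolution of the `Λ`-module `K`, together with a contraction of the augmented
complex that is linear along `ι`. -/
structure SplitMinimalResolution {k Λ B : Type u} [Field k] [Ring Λ] [Algebra k Λ] [Ring B]
    [Algebra k B] (ε : Λ →ₐ[k] k) (ι : B →ₐ[k] Λ) (K : Type u) [AddCommGroup K] [Module k K]
    [Module Λ K] where
  I : ℕ → Type u
  d : ∀ i, (I (i + 1) →₀ Λ) →ₗ[Λ] (I i →₀ Λ)
  aug : (I 0 →₀ Λ) →ₗ[Λ] K
  contr : ∀ i, (I i →₀ Λ) →ₗ[k] (I (i + 1) →₀ Λ)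
  coaug : K →ₗ[k] (I 0 →₀ Λ)
  isLinearAlong_contr : ∀ i, IsLinearAlong ι (contr i)
  isLinearAlong_coaug : IsLinearAlong ι coaug
  d_d : ∀ i x, d i (d (i + 1) x) = 0
  aug_d : ∀ x, aug (d 0 x) = 0
  aug_coaug : ∀ x, aug (coaug x) = x
  coaug_aug_add : ∀ x, coaug (aug x) + d 0 (contr 0 x) = x
  contr_d_add : ∀ i x, contr i (d i x) + d (i + 1) (contr (i + 1) x) = x
  minimal : ∀ i x l, ε (d i x l) = 0

section Existence

variable {k Λ B : Type u} [Field k] [Ring Λ] [Algebra k Λ] [Ring B] [Algebra k B]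
  {ε : Λ →ₐ[k] k}

lemma ModuleGrading.exists_split_minimal_cover {K : Type u} [AddCommGroup K] [Module k K]
    [Module Λ K] [IsScalarTower k Λ K] {G : ConnectedGrading ε} (H : ModuleGrading G.toNatGrading K)
    {ι : B →ₐ[k] Λ} (hK : IsProjectiveAlong ι K) :
    ∃ (J : Type u) (g : (J →₀ Λ) →ₗ[Λ] K) (s : K →ₗ[k] (J →₀ Λ)), IsLinearAlong ι s ∧
      (∀ x, g (s x) = x) ∧ (∀ f ∈ LinearMap.ker g, ∀ j, ε (f j) = 0) ∧
      Nonempty (ModuleGrading G.toNatGrading (LinearMap.ker g)) := by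
  obtain ⟨J, e, deg, he, hli, htop⟩ := H.exists_homogeneous_basis_mod_augSubspace ε
  have surjective : Function.Surjective (Finsupp.linearCombination Λ e) := by
    rw [← LinearMap.range_eq_top, Finsupp.range_linearCombination,
      H.span_eq_top_of_sup_augSubspace_eq_top he htop]
  obtain ⟨s, hs, hgs⟩ := hK.exists_section _ surjective
  exact ⟨J, Finsupp.linearCombination Λ e, s, hs, hgs,
    fun f hf ↦ ModuleGrading.aug_eq_zero_of_linearCombination_eq_zero hli hf,
    ⟨(ModuleGrading.free G deg).ker _ H.toNatGrading (H.linearCombination_proj he)⟩⟩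

/-- A graded `Λ`-module that is projective along `ι`: the objects among which syzygies are
taken. -/
structure GradedProjectiveAlong (G : ConnectedGrading ε) (ι : B →ₐ[k] Λ) where
  carrier : Type u
  [addCommGroup : AddCommGroup carrier]
  [moduleField : Module k carrier]
  [module : Module Λ carrier]
  [isScalarTower : IsScalarTower k Λ carrier]
  grading : ModuleGrading G.toNatGrading carrier
  isProjectiveAlong : IsProjectiveAlong ι carrier

namespace GradedProjectiveAlong

attribute [instance] addCommGroup moduleField module isScalarTower

variable {G : ConnectedGrading ε} {ι : B →ₐ[k] Λ}

noncomputable section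

/-- A type indexing a minimal set of homogeneous generators. -/
def Gen (X : GradedProjectiveAlong G ι) : Type u :=
  (X.grading.exists_split_minimal_cover X.isProjectiveAlong).choose

/-- The minimal free cover. -/
def cover (X : GradedProjectiveAlong G ι) : (X.Gen →₀ Λ) →ₗ[Λ] X.carrier :=
  (X.grading.exists_split_minimal_cover X.isProjectiveAlong).choose_spec.choose

/-- A section of the minimal free cover, linear along `ι`. -/
def coverSection (X : GradedProjectiveAlong G ι) : X.carrier →ₗ[k] (X.Gen →₀ Λ) :=
  (X.grading.exists_split_minimal_cover X.isProjectiveAlong).choose_spec.choose_spec.choose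

lemma cover_spec (X : GradedProjectiveAlong G ι) : IsLinearAlong ι X.coverSection ∧
    (∀ x, X.cover (X.coverSection x) = x) ∧
    (∀ f ∈ LinearMap.ker X.cover, ∀ j, ε (f j) = 0) ∧
    Nonempty (ModuleGrading G.toNatGrading (LinearMap.ker X.cover)) :=
  (X.grading.exists_split_minimal_cover X.isProjectiveAlong).choose_spec.choose_spec.choose_spec

/-- The kernel of the minimal free cover. -/
def syzygy (hΛ : IsProjectiveAlong ι Λ) (X : GradedProjectiveAlong G ι) :
    GradedProjectiveAlong G ι where
  carrier := LinearMap.ker X.cover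
  grading := X.cover_spec.2.2.2.some
  isProjectiveAlong := (hΛ.finsupp X.Gen).ker X.cover_spec.1 X.cover_spec.2.1

variable (hΛ : IsProjectiveAlong ι Λ) (X : GradedProjectiveAlong G ι)

/-- The inclusion of the syzygy module in the free cover. -/
def syzygyIncl : (X.syzygy hΛ).carrier →ₗ[Λ] (X.Gen →₀ Λ) := (LinearMap.ker X.cover).subtype

lemma syzygyIncl_injective : Function.Injective (X.syzygyIncl hΛ) :=
  (LinearMap.ker X.cover).injective_subtype

lemma cover_syzygyIncl (y : (X.syzygy hΛ).carrier) : X.cover (X.syzygyIncl hΛ y) = 0 :=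
  LinearMap.mem_ker.1 y.2

lemma aug_syzygyIncl (y : (X.syzygy hΛ).carrier) (j : X.Gen) : ε (X.syzygyIncl hΛ y j) = 0 :=
  X.cover_spec.2.2.1 _ y.2 j

/-- The projection of the free cover onto the syzygy module along the range of `coverSection`. -/
def syzygyRetraction : (X.Gen →₀ Λ) →ₗ[k] (X.syzygy hΛ).carrier :=
  (LinearMap.id - X.coverSection ∘ₗ X.cover.restrictScalars k).codRestrict
    ((LinearMap.ker X.cover).restrictScalars k) fun x ↦ by
      simp [X.cover_spec.2.1]

lemma syzygyIncl_syzygyRetraction (x : X.Gen →₀ Λ) :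
    X.syzygyIncl hΛ (X.syzygyRetraction hΛ x) = x - X.coverSection (X.cover x) := rfl

lemma syzygyRetraction_syzygyIncl (y : (X.syzygy hΛ).carrier) :
    X.syzygyRetraction hΛ (X.syzygyIncl hΛ y) = y :=
  X.syzygyIncl_injective hΛ <| by
    rw [syzygyIncl_syzygyRetraction, cover_syzygyIncl, map_zero, sub_zero]

lemma isLinearAlong_syzygyRetraction : IsLinearAlong ι (X.syzygyRetraction hΛ) := fun b x ↦
  X.syzygyIncl_injective hΛ <| by
    rw [(X.syzygyIncl hΛ).map_smul, syzygyIncl_syzygyRetraction, syzygyIncl_syzygyRetraction,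
      X.cover.map_smul, X.cover_spec.1, smul_sub]

/-- The composite of the free cover of the syzygy module with its inclusion. -/
def differential : ((X.syzygy hΛ).Gen →₀ Λ) →ₗ[Λ] (X.Gen →₀ Λ) :=
  X.syzygyIncl hΛ ∘ₗ (X.syzygy hΛ).cover

/-- The contracting homotopy of the minimal resolution, linear along `ι`. -/
def contraction : (X.Gen →₀ Λ) →ₗ[k] ((X.syzygy hΛ).Gen →₀ Λ) :=
  (X.syzygy hΛ).coverSection ∘ₗ X.syzygyRetraction hΛ

lemma isLinearAlong_contraction : IsLinearAlong ι (X.contraction hΛ) := fun b x ↦ by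
  rw [contraction, LinearMap.comp_apply, X.isLinearAlong_syzygyRetraction hΛ,
    (X.syzygy hΛ).cover_spec.1, LinearMap.comp_apply]

lemma differential_contraction (x : X.Gen →₀ Λ) :
    X.differential hΛ (X.contraction hΛ x) = x - X.coverSection (X.cover x) := by
  rw [differential, contraction, LinearMap.comp_apply, LinearMap.comp_apply,
    (X.syzygy hΛ).cover_spec.2.1, syzygyIncl_syzygyRetraction]

lemma contraction_differential_add (x : (X.syzygy hΛ).Gen →₀ Λ) :
    X.contraction hΛ (X.differential hΛ x) +
      (X.syzygy hΛ).differential hΛ ((X.syzygy hΛ).contraction hΛ x) = x := by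
  rw [differential_contraction, differential, contraction, LinearMap.comp_apply,
    LinearMap.comp_apply, syzygyRetraction_syzygyIncl, add_sub_cancel]

lemma cover_differential (x : (X.syzygy hΛ).Gen →₀ Λ) : X.cover (X.differential hΛ x) = 0 :=
  X.cover_syzygyIncl hΛ _

lemma differential_differential (x : ((X.syzygy hΛ).syzygy hΛ).Gen →₀ Λ) :
    X.differential hΛ ((X.syzygy hΛ).differential hΛ x) = 0 := by
  rw [differential, LinearMap.comp_apply, cover_differential, map_zero]

/-- The `i`-th syzygy module. -/
def iteratedSyzygy : ℕ → GradedProjectiveAlong G ι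
  | 0 => X
  | i + 1 => (iteratedSyzygy i).syzygy hΛ

/-- The minimal free resolution obtained by iterating free covers. -/
def splitMinimalResolution : SplitMinimalResolution ε ι X.carrier :=
  let Y := X.iteratedSyzygy hΛ
  { I := fun i ↦ (Y i).Gen
    d := fun i ↦ (Y i).differential hΛ
    aug := X.cover
    contr := fun i ↦ (Y i).contraction hΛ
    coaug := X.coverSection
    isLinearAlong_contr := fun i ↦ (Y i).isLinearAlong_contraction hΛ
    isLinearAlong_coaug := X.cover_spec.1
    d_d := fun i ↦ (Y i).differential_differential hΛ
    aug_d := X.cover_differential hΛ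
    aug_coaug := X.cover_spec.2.1
    coaug_aug_add := fun x ↦ add_eq_of_eq_sub' (X.differential_contraction hΛ x)
    contr_d_add := fun i ↦ (Y i).contraction_differential_add hΛ
    minimal := fun i _ ↦ (Y i).aug_syzygyIncl hΛ _ }

end

end GradedProjectiveAlong

end Existence

section Bimodule

variable {k A B : Type u} [Field k] [Ring A] [Algebra k A] [Ring B] [Algebra k B]
  {ε : A →ₐ[k] k}

/-- The algebra `A` as a bimodule over itself. Only a local instance: as a global one it breaks the
search for other scalar actions of `A ⊗ Aᵐᵒᵖ`. -/
noncomputable abbrev selfBimodule : Module (A ⊗[k] Aᵐᵒᵖ) A := TensorProduct.Algebra.module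

attribute [local instance] selfBimodule

lemma tmul_smul_eq_mul_mul (a x : A) (b : Aᵐᵒᵖ) : (a ⊗ₜ[k] b) • x = a * (x * b.unop) := rfl

lemma isScalarTower_selfBimodule : IsScalarTower k (A ⊗[k] Aᵐᵒᵖ) A :=
  ⟨fun c r x ↦ LinearMap.congr_fun (map_smul TensorProduct.Algebra.moduleAux c r) x⟩

attribute [local instance] isScalarTower_selfBimodule

/-- The grading of `A` as a graded bimodule over itself. -/
noncomputable def ConnectedGrading.bimodule (G : ConnectedGrading ε) :
    ModuleGrading (G.tensor G.op).toNatGrading A where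
  toNatGrading := G.toNatGrading
  smul_mem hr hx := by
    refine NatGrading.apply_mem_piece_of_span
      (f := (Algebra.lsmul k k (A := A ⊗[k] Aᵐᵒᵖ) A).toLinearMap)
      (G.span_homogeneousTensors G.op.toNatGrading) G.span_iUnion_piece ?_ hr hx
    rintro _ ⟨a, x, hx, b, y, hy, rfl⟩ z hz
    obtain ⟨c, hc⟩ := Set.mem_iUnion.1 hz
    refine ⟨a + b, c, NatGrading.tmul_mem_piece hx hy, hc, ?_⟩
    change (x ⊗ₜ[k] y) • z ∈ _
    rw [tmul_smul_eq_mul_mul, add_assoc, add_comm b]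
    exact G.mul_mem hx (G.mul_mem hc (NatGrading.mem_piece_congr.1 hy))

lemma isProjectiveAlong_includeRight :
    IsProjectiveAlong (Algebra.TensorProduct.includeRight (R := k) (A := A) (B := B))
      (A ⊗[k] B) := by
  let := Module.compHom (A ⊗[k] B)
    (Algebra.TensorProduct.includeRight (R := k) (A := A) (B := B)).toRingHom
  let e : B ⊗[k] A ≃ₗ[B] A ⊗[k] B :=
    { (TensorProduct.comm k B A).toAddEquiv with
      map_smul' := fun b z ↦ by
        change TensorProduct.comm k B A (b • z) = ((1 : A) ⊗ₜ[k] b) * TensorProduct.comm k B A z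
        induction z with
        | zero => simp only [smul_zero, map_zero, mul_zero]
        | add x y hx hy => rw [smul_add, map_add, hx, hy, map_add, mul_add]
        | tmul x y => simp only [TensorProduct.smul_tmul', TensorProduct.comm_tmul,
            Algebra.TensorProduct.tmul_mul_tmul, one_mul, smul_eq_mul] }
  exact Module.Projective.of_equiv e

lemma isProjectiveAlong_includeRight_bimodule :
    IsProjectiveAlong (Algebra.TensorProduct.includeRight (R := k) (A := A) (B := Aᵐᵒᵖ)) A := by
  let := Module.compHom A
    (Algebra.TensorProduct.includeRight (R := k) (A := A) (B := Aᵐᵒᵖ)).toRingHom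
  let e : Aᵐᵒᵖ ≃ₗ[Aᵐᵒᵖ] A :=
    { MulOpposite.opAddEquiv.symm with
      map_smul' := fun b z ↦ by
        change z.unop * b.unop = 1 * (z.unop * b.unop)
        rw [one_mul] }
  exact Module.Projective.of_equiv e

/-- The minimal bimodule resolution of `A`, contractible as a complex of right `A`-modules. -/
noncomputable def ConnectedGrading.bimoduleResolution (G : ConnectedGrading ε) :
    SplitMinimalResolution (Algebra.TensorProduct.productMap ε (mopAug ε))
      (Algebra.TensorProduct.includeRight (R := k) (A := A) (B := Aᵐᵒᵖ)) A :=
  GradedProjectiveAlong.splitMinimalResolution isProjectiveAlong_includeRight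
    ({ carrier := A
       grading := G.bimodule
       isProjectiveAlong := isProjectiveAlong_includeRight_bimodule } :
      GradedProjectiveAlong (G.tensor G.op) _)

end Bimodule

/-! ### Tensoring the bimodule resolution with a module -/

section BalancedTensor

variable {k A : Type u} [Field k] [Ring A] [Algebra k A]
  {M : Type u} [AddCommGroup M] [Module k M] [Module A M] [IsScalarTower k A M]
  {T : Type u} [AddCommMonoid T] [Module k T] {J J' : Type u}

/-- For a free `A ⊗ Aᵐᵒᵖ`-module `X = (J →₀ A ⊗ Aᵐᵒᵖ)`, regarded as an `A`-bimodule, the tensor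
product `X ⊗_A M` is encoded as `J →₀ A ⊗ M`; the element `balancedTmul m x` stands for `x ⊗ m`. -/
noncomputable def balancedTmul : M →ₗ[k] (J →₀ A ⊗[k] Aᵐᵒᵖ) →ₗ[k] (J →₀ A ⊗[k] M) :=
  let opSmul : M →ₗ[k] Aᵐᵒᵖ →ₗ[k] M :=
    ((Algebra.lsmul k k M).toLinearMap ∘ₗ (MulOpposite.opLinearEquiv k).symm.toLinearMap).flip
  { toFun := fun m ↦ Finsupp.mapRange.linearMap (LinearMap.lTensor A (opSmul m))
    map_add' := fun m m' ↦ LinearMap.ext fun x ↦ Finsupp.ext fun j ↦ by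
      simp only [Finsupp.mapRange.linearMap_apply, Finsupp.mapRange_apply, LinearMap.add_apply,
        Finsupp.add_apply, map_add, LinearMap.lTensor_add]
    map_smul' := fun c m ↦ LinearMap.ext fun x ↦ Finsupp.ext fun j ↦ by
      simp only [Finsupp.mapRange.linearMap_apply, Finsupp.mapRange_apply, LinearMap.smul_apply,
        Finsupp.smul_apply, map_smul, LinearMap.lTensor_smul, RingHom.id_apply] }

lemma balancedTmul_single (m : M) (j : J) (a : A) (b : Aᵐᵒᵖ) :
    balancedTmul (k := k) m (.single j (a ⊗ₜ b)) = .single j (a ⊗ₜ (b.unop • m)) :=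
  Finsupp.mapRange_single (hf := map_zero _)

@[elab_as_elim]
lemma single_tmul_induction_on {N : Type u} [AddCommGroup N] [Module k N]
    {p : (J →₀ A ⊗[k] N) → Prop} (x : J →₀ A ⊗[k] N) (zero : p 0)
    (add : ∀ x y, p x → p y → p (x + y)) (single : ∀ j a b, p (.single j (a ⊗ₜ b))) : p x := by
  induction x using Finsupp.induction_linear with
  | zero => exact zero
  | add x y hx hy => exact add x y hx hy
  | single j z =>
    induction z with
    | zero => rwa [Finsupp.single_zero]
    | add z w hz hw => rw [Finsupp.single_add]; exact add _ _ hz hw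
    | tmul a b => exact single j a b

lemma balancedTmul_tmul_one_smul (m : M) (a : A) (x : J →₀ A ⊗[k] Aᵐᵒᵖ) :
    balancedTmul m ((a ⊗ₜ[k] (1 : Aᵐᵒᵖ)) • x) = a • balancedTmul m x := by
  induction x using single_tmul_induction_on with
  | zero => simp only [smul_zero, map_zero]
  | add x y hx hy => rw [smul_add, map_add, hx, hy, map_add, smul_add]
  | single j c b =>
    rw [Finsupp.smul_single, smul_eq_mul, Algebra.TensorProduct.tmul_mul_tmul, balancedTmul_single,
      balancedTmul_single, Finsupp.smul_single, TensorProduct.smul_tmul', one_mul, smul_eq_mul]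

lemma balancedTmul_one_tmul_smul (m : M) (b : Aᵐᵒᵖ) (x : J →₀ A ⊗[k] Aᵐᵒᵖ) :
    balancedTmul m (((1 : A) ⊗ₜ[k] b) • x) = balancedTmul (b.unop • m) x := by
  induction x using single_tmul_induction_on with
  | zero => simp only [smul_zero, map_zero]
  | add x y hx hy => rw [smul_add, map_add, hx, hy, map_add]
  | single j a c =>
    rw [Finsupp.smul_single, smul_eq_mul, Algebra.TensorProduct.tmul_mul_tmul, balancedTmul_single,
      balancedTmul_single, one_mul, MulOpposite.unop_mul, mul_smul]

@[elab_as_elim]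
lemma balancedTmul_induction_on {p : (J →₀ A ⊗[k] M) → Prop} (y : J →₀ A ⊗[k] M)
    (add : ∀ y z, p y → p z → p (y + z))
    (tmul : ∀ m (x : J →₀ A ⊗[k] Aᵐᵒᵖ), p (balancedTmul m x)) : p y := by
  induction y using single_tmul_induction_on with
  | zero => simpa only [map_zero] using tmul 0 0
  | add y z hy hz => exact add y z hy hz
  | single j a m =>
    simpa only [balancedTmul_single, MulOpposite.unop_one, one_smul] using
      tmul m (.single j (a ⊗ₜ 1))

/-- A bilinear map of `m` and `x` is balanced if it factors through `balancedTmul`, the universal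
such map. -/
def IsBalanced (φ : M →ₗ[k] (J →₀ A ⊗[k] Aᵐᵒᵖ) →ₗ[k] T) : Prop :=
  ∀ m (b : Aᵐᵒᵖ) x, φ m (((1 : A) ⊗ₜ[k] b) • x) = φ (b.unop • m) x

/-- The map `(J →₀ A ⊗ M) → T` induced by a bilinear map `φ`; it is only meaningful if `φ` is
balanced. -/
noncomputable def balancedLift (φ : M →ₗ[k] (J →₀ A ⊗[k] Aᵐᵒᵖ) →ₗ[k] T) :
    (J →₀ A ⊗[k] M) →ₗ[k] T :=
  Finsupp.lsum k fun j ↦ TensorProduct.lift <|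
    φ.flip ∘ₗ Finsupp.lsingle j ∘ₗ (TensorProduct.mk k A Aᵐᵒᵖ).flip 1

lemma IsBalanced.balancedLift_balancedTmul {φ : M →ₗ[k] (J →₀ A ⊗[k] Aᵐᵒᵖ) →ₗ[k] T}
    (hφ : IsBalanced φ) (m : M) (x : J →₀ A ⊗[k] Aᵐᵒᵖ) :
    balancedLift φ (balancedTmul m x) = φ m x := by
  induction x using single_tmul_induction_on with
  | zero => simp only [map_zero]
  | add x y hx hy => simp only [map_add, hx, hy]
  | single j a b =>
    have single_eq : Finsupp.single j (a ⊗ₜ[k] b) =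
        ((1 : A) ⊗ₜ[k] b) • Finsupp.single j (a ⊗ₜ[k] (1 : Aᵐᵒᵖ)) := by
      rw [Finsupp.smul_single, smul_eq_mul, Algebra.TensorProduct.tmul_mul_tmul, one_mul, mul_one]
    rw [balancedTmul_single, single_eq, hφ]
    exact Finsupp.lsum_single ..

/-- The `A`-linear version of `balancedLift`, for `φ` compatible with the left action of `A`. -/
noncomputable def IsBalanced.linearLift [Module A T] {φ : M →ₗ[k] (J →₀ A ⊗[k] Aᵐᵒᵖ) →ₗ[k] T}
    (hφ : IsBalanced φ) (hA : ∀ m (a : A) x, φ m ((a ⊗ₜ[k] (1 : Aᵐᵒᵖ)) • x) = a • φ m x) :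
    (J →₀ A ⊗[k] M) →ₗ[A] T where
  toFun := balancedLift φ
  map_add' := map_add _
  map_smul' a y := by
    rw [RingHom.id_apply]
    induction y using balancedTmul_induction_on with
    | add y z hy hz => rw [smul_add, map_add, hy, hz, map_add, smul_add]
    | tmul m x => rw [← balancedTmul_tmul_one_smul, hφ.balancedLift_balancedTmul, hA,
        hφ.balancedLift_balancedTmul]

lemma isBalanced_compl₂_balancedTmul {f : (J →₀ A ⊗[k] Aᵐᵒᵖ) →ₗ[k] (J' →₀ A ⊗[k] Aᵐᵒᵖ)}
    (hf : IsLinearAlong (Algebra.TensorProduct.includeRight (R := k) (A := A) (B := Aᵐᵒᵖ)) f) :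
    IsBalanced ((balancedTmul (M := M)).compl₂ f) := fun m b x ↦ by
  simp only [LinearMap.compl₂_apply]
  exact (congrArg (balancedTmul m) (hf b x)).trans (balancedTmul_one_tmul_smul m b (f x))

end BalancedTensor

namespace SplitMinimalResolution

attribute [local instance] selfBimodule isScalarTower_selfBimodule

variable {k A : Type u} [Field k] [Ring A] [Algebra k A] {ε : A →ₐ[k] k}

section Tensor

variable (F : SplitMinimalResolution (Algebra.TensorProduct.productMap ε (mopAug ε))
    Algebra.TensorProduct.includeRight A)
  (M : Type u) [AddCommGroup M] [Module k M] [Module A M] [IsScalarTower k A M]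

/-- The differential `d ⊗_A M` of `F ⊗_A M`. -/
noncomputable def tensorD (i : ℕ) : (F.I (i + 1) →₀ A ⊗[k] M) →ₗ[A] (F.I i →₀ A ⊗[k] M) :=
  (isBalanced_compl₂_balancedTmul (f := (F.d i).restrictScalars k)
    fun b ↦ (F.d i).map_smul _).linearLift fun m a x ↦ by
      simp only [LinearMap.compl₂_apply, LinearMap.restrictScalars_apply, map_smul,
        balancedTmul_tmul_one_smul]

/-- The contraction `h ⊗_A M` of `F ⊗_A M`; it is well defined because the contraction `h` of the
bimodule resolution is linear over `Aᵐᵒᵖ`. -/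
noncomputable def tensorContr (i : ℕ) : (F.I i →₀ A ⊗[k] M) →ₗ[k] (F.I (i + 1) →₀ A ⊗[k] M) :=
  balancedLift (balancedTmul.compl₂ (F.contr i))

/-- The bilinear map `(m, x) ↦ aug x • m` that induces the augmentation of `F ⊗_A M`. -/
noncomputable def augSmul : M →ₗ[k] (F.I 0 →₀ A ⊗[k] Aᵐᵒᵖ) →ₗ[k] M :=
  (Algebra.lsmul k k M).toLinearMap.flip.compl₂ (F.aug.restrictScalars k)

lemma augSmul_apply (m : M) (x : F.I 0 →₀ A ⊗[k] Aᵐᵒᵖ) : F.augSmul M m x = F.aug x • m := rfl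

lemma isBalanced_augSmul : IsBalanced (F.augSmul M) := fun m b x ↦ by
  rw [augSmul_apply, augSmul_apply, map_smul, tmul_smul_eq_mul_mul, one_mul, mul_smul]

/-- The augmentation `F 0 ⊗_A M → A ⊗_A M = M`. -/
noncomputable def tensorAug : (F.I 0 →₀ A ⊗[k] M) →ₗ[A] M :=
  (F.isBalanced_augSmul M).linearLift fun m a x ↦ by
    rw [augSmul_apply, augSmul_apply, map_smul, tmul_smul_eq_mul_mul, MulOpposite.unop_one,
      mul_one, mul_smul]

/-- The section of `tensorAug` induced by the section of the augmentation of `F`. -/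
noncomputable def tensorCoaug : M →ₗ[k] (F.I 0 →₀ A ⊗[k] M) := balancedTmul.flip (F.coaug 1)

variable {M}

lemma tensorD_balancedTmul (i : ℕ) (m : M) (x : F.I (i + 1) →₀ A ⊗[k] Aᵐᵒᵖ) :
    F.tensorD M i (balancedTmul m x) = balancedTmul m (F.d i x) :=
  (isBalanced_compl₂_balancedTmul fun _ ↦ (F.d i).map_smul _).balancedLift_balancedTmul m x

lemma tensorContr_balancedTmul (i : ℕ) (m : M) (x : F.I i →₀ A ⊗[k] Aᵐᵒᵖ) :
    F.tensorContr M i (balancedTmul m x) = balancedTmul m (F.contr i x) :=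
  (isBalanced_compl₂_balancedTmul (F.isLinearAlong_contr i)).balancedLift_balancedTmul m x

lemma tensorAug_balancedTmul (m : M) (x : F.I 0 →₀ A ⊗[k] Aᵐᵒᵖ) :
    F.tensorAug M (balancedTmul m x) = F.aug x • m :=
  (F.isBalanced_augSmul M).balancedLift_balancedTmul m x

lemma tensorCoaug_aug_smul (m : M) (x : F.I 0 →₀ A ⊗[k] Aᵐᵒᵖ) :
    F.tensorCoaug M (F.aug x • m) = balancedTmul m (F.coaug (F.aug x)) := by
  have coaug_eq : F.coaug (F.aug x) = ((1 : A) ⊗ₜ[k] MulOpposite.op (F.aug x)) • F.coaug 1 := by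
    rw [← Algebra.TensorProduct.includeRight_apply, ← F.isLinearAlong_coaug,
      Algebra.TensorProduct.includeRight_apply, tmul_smul_eq_mul_mul, one_mul, one_mul,
      MulOpposite.unop_op]
  rw [coaug_eq, balancedTmul_one_tmul_smul, MulOpposite.unop_op]
  rfl

lemma tensorAug_tensorCoaug (m : M) : F.tensorAug M (F.tensorCoaug M m) = m := by
  change F.tensorAug M (balancedTmul m (F.coaug 1)) = m
  rw [tensorAug_balancedTmul, F.aug_coaug, one_smul]

lemma tensorD_tensorD (i : ℕ) (y : F.I (i + 2) →₀ A ⊗[k] M) :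
    F.tensorD M i (F.tensorD M (i + 1) y) = 0 := by
  induction y using balancedTmul_induction_on with
  | add y z hy hz => rw [map_add, map_add, hy, hz, add_zero]
  | tmul m x => rw [tensorD_balancedTmul, tensorD_balancedTmul, F.d_d, map_zero]

lemma tensorAug_tensorD (y : F.I 1 →₀ A ⊗[k] M) : F.tensorAug M (F.tensorD M 0 y) = 0 := by
  induction y using balancedTmul_induction_on with
  | add y z hy hz => rw [map_add, map_add, hy, hz, add_zero]
  | tmul m x => rw [tensorD_balancedTmul, tensorAug_balancedTmul, F.aug_d, zero_smul]

lemma tensorContr_tensorD_add (i : ℕ) (y : F.I (i + 1) →₀ A ⊗[k] M) :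
    F.tensorContr M i (F.tensorD M i y) + F.tensorD M (i + 1) (F.tensorContr M (i + 1) y) = y := by
  induction y using balancedTmul_induction_on with
  | add y z hy hz => simp only [map_add]; rw [add_add_add_comm, hy, hz]
  | tmul m x => rw [tensorD_balancedTmul, tensorContr_balancedTmul, tensorContr_balancedTmul,
      tensorD_balancedTmul, ← map_add, F.contr_d_add]

lemma tensorCoaug_tensorAug_add (y : F.I 0 →₀ A ⊗[k] M) :
    F.tensorCoaug M (F.tensorAug M y) + F.tensorD M 0 (F.tensorContr M 0 y) = y := by
  induction y using balancedTmul_induction_on with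
  | add y z hy hz => simp only [map_add]; rw [add_add_add_comm, hy, hz]
  | tmul m x => rw [tensorAug_balancedTmul, tensorCoaug_aug_smul, tensorContr_balancedTmul,
      tensorD_balancedTmul, ← map_add, F.coaug_aug_add]

lemma exact_tensorD (i : ℕ) : Function.Exact (F.tensorD M (i + 1)) (F.tensorD M i) := fun y ↦
  ⟨fun hy ↦ ⟨F.tensorContr M (i + 1) y, by
    simpa only [hy, map_zero, zero_add] using F.tensorContr_tensorD_add i y⟩,
    by rintro ⟨z, rfl⟩; exact F.tensorD_tensorD i z⟩

lemma exact_tensorAug : Function.Exact (F.tensorD M 0) (F.tensorAug M) := fun y ↦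
  ⟨fun hy ↦ ⟨F.tensorContr M 0 y, by
    simpa only [hy, map_zero, zero_add] using F.tensorCoaug_tensorAug_add y⟩,
    by rintro ⟨z, rfl⟩; exact F.tensorAug_tensorD z⟩

variable (M)

/-- The projective resolution `F ⊗_A M` of `M`: the contraction of the bimodule resolution `F` is
linear on the right, so tensoring with `M` preserves exactness. -/
noncomputable def tensor : ModuleResolution A M where
  X i := ModuleCat.of A (F.I i →₀ A ⊗[k] M)
  d := F.tensorD M
  aug := F.tensorAug M
  projective i := by
    classical
    exact Module.Projective.of_equiv (finsuppLequivDFinsupp A).symm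
  aug_surjective := Function.LeftInverse.surjective F.tensorAug_tensorCoaug
  exact_aug := F.exact_tensorAug
  exact := F.exact_tensorD

end Tensor

/-- The identification of `F i ⊗_A k = (J →₀ A ⊗ k)` with the free `A`-module on `J`. -/
noncomputable def finsuppRid (J : Type u) : (J →₀ A ⊗[k] k) ≃ₗ[A] (J →₀ A) :=
  Finsupp.mapRange.linearEquiv (TensorProduct.AlgebraTensorModule.rid k A A)

lemma finsuppRid_single_tmul {J : Type u} (j : J) (a : A) (c : k) :
    finsuppRid J (.single j (a ⊗ₜ[k] c)) = .single j (c • a) := by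
  refine Finsupp.mapRange_single (hf := map_zero _) |>.trans ?_
  rw [TensorProduct.AlgebraTensorModule.rid_tmul]

lemma aug_finsuppRid_balancedTmul [Module A k] [IsScalarTower k A k]
    (hk : ∀ (r : A) (c : k), r • c = ε r * c) {J : Type u} (m : k) (x : J →₀ A ⊗[k] Aᵐᵒᵖ) (l : J) :
    ε (finsuppRid J (balancedTmul m x) l) =
      Algebra.TensorProduct.productMap ε (mopAug ε) (x l) * m := by
  classical
  induction x using single_tmul_induction_on with
  | zero => simp only [map_zero, Finsupp.coe_zero, Pi.zero_apply, zero_mul]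
  | add x y hx hy => simp only [map_add, Finsupp.add_apply, hx, hy, add_mul]
  | single j a b =>
    rw [balancedTmul_single, finsuppRid_single_tmul, Finsupp.single_apply, Finsupp.single_apply]
    split_ifs
    · rw [map_smul, smul_eq_mul, hk, Algebra.TensorProduct.productMap_apply_tmul, mul_comm,
        ← mul_assoc]
      rfl
    · rw [map_zero, map_zero, zero_mul]

variable [Module A k]

/-- Tensoring the bimodule resolution with `k` over `A` preserves minimality. -/
noncomputable def minimalResolution
    (F : SplitMinimalResolution (Algebra.TensorProduct.productMap ε (mopAug ε))
      Algebra.TensorProduct.includeRight A) (hk : ∀ (r : A) (c : k), r • c = ε r * c) :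
    MinimalResolution ε :=
  have := isScalarTower_of_aug hk
  { I := F.I
    d i := (finsuppRid (F.I i)).toLinearMap ∘ₗ F.tensorD k i ∘ₗ
      (finsuppRid (F.I (i + 1))).symm.toLinearMap
    aug := F.tensorAug k ∘ₗ (finsuppRid (F.I 0)).symm.toLinearMap
    aug_surjective := (F.tensor k).aug_surjective.comp (finsuppRid _).symm.surjective
    exact_aug := by
      refine (Function.Exact.iff_of_ladder_linearEquiv (e₁ := (finsuppRid _).symm)
        (e₂ := (finsuppRid _).symm) (e₃ := LinearEquiv.refl A k) ?_ rfl).1 F.exact_tensorAug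
      ext1 x
      simp only [Nat.reduceAdd, LinearEquiv.symm_comp_assoc]
    exact i := by
      refine (Function.Exact.iff_of_ladder_linearEquiv (e₁ := (finsuppRid _).symm)
        (e₂ := (finsuppRid _).symm) (e₃ := (finsuppRid _).symm) ?_ ?_).1 (F.exact_tensorD i)
      · ext1 x
        simp only [LinearEquiv.symm_comp_assoc]
      · ext1 x
        simp only [LinearEquiv.symm_comp_assoc]
    minimal i x l := by
      change ε (finsuppRid _ (F.tensorD k i ((finsuppRid _).symm x)) l) = 0
      generalize (finsuppRid (k := k) (F.I (i + 1))).symm x = y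
      induction y using balancedTmul_induction_on with
      | add y z hy hz => rw [map_add, map_add, Finsupp.add_apply, map_add, hy, hz, add_zero]
      | tmul m x => rw [tensorD_balancedTmul, aug_finsuppRid_balancedTmul hk, F.minimal, zero_mul] }

lemma globalDim_le
    (F : SplitMinimalResolution (Algebra.TensorProduct.productMap ε (mopAug ε))
      Algebra.TensorProduct.includeRight A) (hk : ∀ (r : A) (c : k), r • c = ε r * c) {n : ℕ}
    (h : (ModuleCat.of A k).projDim ≤ n) : Ring.globalDim A ≤ n := by
  refine iSup_le fun M ↦ ?_
  let := Module.compHom M (algebraMap k A)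
  have : IsScalarTower k A M := .of_algebraMap_smul fun _ _ ↦ rfl
  refine (F.tensor M).projDim_le fun i hi ↦ ?_
  have : IsEmpty (F.I i) := (F.minimalResolution hk).isEmpty_of_lt hk h hi
  exact inferInstanceAs (Subsingleton (F.I i →₀ A ⊗[k] M))

end SplitMinimalResolution

/-! ### Artin–Schelter regularity -/

section Main

variable {k R : Type u} [Field k] [Ring R] [Algebra k R] {ε : R →ₐ[k] k} {n : ℕ}

lemma PoincareDualResolution.projDim_le [Module R k] (P : PoincareDualResolution ε n)
    (hk : ∀ (r : R) (c : k), r • c = ε r * c) : (ModuleCat.of R k).projDim ≤ n :=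
  (P.toModuleResolution hk).projDim_le fun i hi ↦
    have := P.isEmpty_piece hi
    inferInstanceAs (Subsingleton (P.Piece i → R))

lemma PoincareDualResolution.globalDim_eq (P : PoincareDualResolution ε n)
    (G : ConnectedGrading ε) : Ring.globalDim R = n := by
  let : Module R k := Module.compHom k ε.toRingHom
  have hk (r : R) (c : k) : r • c = ε r * c := rfl
  refine (G.bimoduleResolution.globalDim_le hk (P.projDim_le hk)).antisymm (not_lt.1 fun h ↦ ?_)
  have := subsingleton_extGroup_of_projDim_lt k (ModuleCat.of R R)
    ((le_iSup ModuleCat.projDim (ModuleCat.of R k)).trans_lt h)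
  obtain ⟨e⟩ := P.nonempty_ext_linearEquiv hk
  exact not_subsingleton k e.symm.toEquiv.subsingleton

lemma PoincareDualResolution.isASRegularAug (P : PoincareDualResolution ε n)
    (G : ConnectedGrading ε) : IsASRegularAug k R ε n := by
  let : Module R k := Module.compHom k ε.toRingHom
  let : Module Rᵐᵒᵖ k := Module.compHom k (mopAug ε).toRingHom
  exact ⟨P.globalDim_eq G, fun i hi ↦ P.subsingleton_ext (fun _ _ ↦ rfl) hi,
    P.nonempty_ext_linearEquiv fun _ _ ↦ rfl, fun i hi ↦ P.op.subsingleton_ext (fun _ _ ↦ rfl) hi,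
    P.op.nonempty_ext_linearEquiv fun _ _ ↦ rfl⟩

lemma ConnectedGrading.nonempty_poincareDualResolution (G : ConnectedGrading ε)
    (h : IsASRegularAug k R ε n) : Nonempty (PoincareDualResolution ε n) := by
  let : Module R k := Module.compHom k ε.toRingHom
  have hk (r : R) (c : k) : r • c = ε r * c := rfl
  obtain ⟨globalDim_eq, subsingleton_ext, nonempty_ext, -, -⟩ := h
  have projDim_le : (ModuleCat.of R k).projDim ≤ n :=
    (le_iSup ModuleCat.projDim (ModuleCat.of R k)).trans globalDim_eq.le
  exact (G.bimoduleResolution.minimalResolution hk).nonempty_poincareDualResolution hk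
    ⟨projDim_le, subsingleton_ext, nonempty_ext⟩

lemma ConnectedGrading.isASRegularAug_op (G : ConnectedGrading ε)
    (h : IsASRegularAug k R ε n) : IsASRegularAug k Rᵐᵒᵖ (mopAug ε) n := by
  obtain ⟨P⟩ := G.nonempty_poincareDualResolution h
  exact P.op.isASRegularAug G.op

end Main

theorem stmt_11_general {k A B : Type u} [Field k] [Ring A] [Algebra k A] [Ring B] [Algebra k B]
    {ε : A →ₐ[k] k} {ε' : B →ₐ[k] k} (G : ConnectedGrading ε) (G' : ConnectedGrading ε') {m n : ℕ}
    (hA : IsASRegularAug k A ε m) (hB : IsASRegularAug k B ε' n) :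
    IsASRegularAug k (A ⊗[k] B) (Algebra.TensorProduct.productMap ε ε') (m + n) := by
  obtain ⟨P⟩ := G.nonempty_poincareDualResolution hA
  obtain ⟨P'⟩ := G'.nonempty_poincareDualResolution hB
  exact (P.tensor P').isASRegularAug (G.tensor G')

/-- Proposition 4.5(a): if `A` is an Artin–Schelter regular connected graded
`k`-algebra of global dimension `n`, then `A^e = A ⊗[k] Aᵐᵒᵖ` is Artin–Schelter regular of
global dimension `2n` (with respect to the induced augmentation `ε ⊗ εᵒᵖ`). -/
theorem stmt_11 (k : Type u) [Field k] (A : Type u) [Ring A] [Algebra k A]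
    (𝒜 : ℕ → Submodule k A) [GradedAlgebra 𝒜]
    (hconn : 𝒜 0 = (1 : Submodule k A))
    (ε : A →ₐ[k] k)
    (hker : RingHom.ker ε.toRingHom = Ideal.span {x : A | ∃ i, 0 < i ∧ x ∈ 𝒜 i})
    (n : ℕ) (hA : IsASRegularAug k A ε n) :
    IsASRegularAug k (A ⊗[k] Aᵐᵒᵖ) (Algebra.TensorProduct.productMap ε (mopAug ε)) (2 * n) := by
  have G := ConnectedGrading.ofGradedAlgebra 𝒜 hconn hker
  exact two_mul n ▸ stmt_11_general G G.op hA (G.isASRegularAug_op hA)
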